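/- Let k ≥ 3 be an integer with k ∉ {4,5}. For all sufficiently large n, if G is an n-vertex W_{2k+1}-free simple graph attaining the maximum spectral radius among all n-vertex W_{2k+1}-free graphs, V(G) = L ⊔ R is a maximum cut of G, and L contains a vertex of internal degree k − 1, then the induced subgraph G[L] is (k−1)-regular if (k−1)·|L| is even, and nearly (k−1)-regular (every vertex of degree k−1 except one vertex of degree k−2) if (k−1)·|L| is odd; moreover the induced subgraph G[R] contains exactly one edge. -/

import Mathlib

/-- The wheel graph on `t` vertices: vertex `0` joined to every vertex of the
cycle `1, 2, …, t-1` (with `t-1` adjacent to `1`). -/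
def wheelGraph (t : ℕ) : SimpleGraph (Fin t) where
  Adj a b := a ≠ b ∧ (a.val = 0 ∨ b.val = 0 ∨ a.val + 1 = b.val ∨ b.val + 1 = a.val ∨
      (a.val = 1 ∧ b.val = t - 1) ∨ (b.val = 1 ∧ a.val = t - 1))
  symm := by
    constructor
    intro a b h
    exact ⟨h.1.symm, by tauto⟩
  loopless := by
    constructor
    intro a h
    exact h.1 rfl

/-- `G` contains a copy of `F`, i.e. a subgraph isomorphic to `F`. -/
def ContainsCopy {α β : Type*} (F : SimpleGraph α) (G : SimpleGraph β) : Prop :=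
  ∃ f : α ↪ β, ∀ a b, F.Adj a b → G.Adj (f a) (f b)

/-- `G` is `W_t`-free: it contains no subgraph isomorphic to the wheel on `t` vertices. -/
def WheelFree (t : ℕ) {n : ℕ} (G : SimpleGraph (Fin n)) : Prop :=
  ¬ ContainsCopy (wheelGraph t) G

/-- The spectral radius of `G`: the largest eigenvalue of its adjacency matrix. -/
noncomputable def lam1 {n : ℕ} (G : SimpleGraph (Fin n)) : ℝ := by
  classical
  exact sSup {μ : ℝ | Module.End.HasEigenvalue (Matrix.toLin' (G.adjMatrix ℝ)) μ}

/-- The number of edges of a graph on a finite vertex type. -/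
noncomputable def edgeCount {V : Type*} [Fintype V] (G : SimpleGraph V) : ℕ := by
  classical
  exact G.edgeFinset.card

/-- The degree of a vertex. -/
noncomputable def deg {n : ℕ} (G : SimpleGraph (Fin n)) (v : Fin n) : ℕ := by
  classical
  exact G.degree v

/-- The number of neighbours of `v` inside the set `A`. -/
noncomputable def degIn {n : ℕ} (G : SimpleGraph (Fin n)) (A : Finset (Fin n)) (v : Fin n) : ℕ := by
  classical
  exact (A.filter fun u => G.Adj v u).card

/-- The number of edges of `G` with one endpoint in `S` and the other outside `S`. -/
noncomputable def cutCount {n : ℕ} (G : SimpleGraph (Fin n)) (S : Finset (Fin n)) : ℕ := by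
  classical
  exact ((Finset.univ : Finset (Fin n × Fin n)).filter
    fun p => G.Adj p.1 p.2 ∧ p.1 ∈ S ∧ p.2 ∉ S).card

/-- `(S, T)` is a maximum cut of `G`. -/
def IsMaxCut {n : ℕ} (G : SimpleGraph (Fin n)) (S T : Finset (Fin n)) : Prop :=
  T = Sᶜ ∧ ∀ S' : Finset (Fin n), cutCount G S' ≤ cutCount G S

/-- `G` attains the maximum spectral radius among all `n`-vertex `W_t`-free graphs. -/
def IsSpexWheel (t : ℕ) {n : ℕ} (G : SimpleGraph (Fin n)) : Prop :=
  WheelFree t G ∧ ∀ H : SimpleGraph (Fin n), WheelFree t H → lam1 H ≤ lam1 G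

/-- `G` attains the maximum number of edges among all `n`-vertex `W_t`-free graphs. -/
def IsExWheel (t : ℕ) {n : ℕ} (G : SimpleGraph (Fin n)) : Prop :=
  WheelFree t G ∧ ∀ H : SimpleGraph (Fin n), WheelFree t H → edgeCount H ≤ edgeCount G

/-!
Let `G` be a `W_{2k+1}`-free graph of maximum spectral radius and `(L, R)` a maximum cut of it.

A near-extremal `W_{2k+1}`-free graph is close to a balanced complete bipartite graph, by a
stability argument. Spectral maximality improves this from most vertices to every vertex: a
vertex adjacent to too little of the other part could be reconnected to nearly all of it. Hence all
Perron entries are close to `1`, the internal degrees are at most `k - 1`, and, if some `v ∈ L` has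
internal degree `k - 1`, two edges among the many vertices of `R` joined to `v` and to all its
neighbours in `L` would create a wheel, so `R` spans few edges.

Now compare `G` with the wheel-free graph `J` joining `L` completely to `R`, where `J[L]` is as
regular of degree `k - 1` as parity permits, with components of size at most `2(k - 1)`, and where
`R` spans a single edge `ab`. Pairing a Perron vector of `G` with an eigenvector of `J`, the
inequality `λ₁(J) ≤ λ₁(G)` says that the degrees missing from `G[L]`, minus the parity defect of
`J[L]`, are paid for by the edges of `G[R]` other than `ab`. A first application shows that few
degrees are missing, so that almost every vertex of `L` has internal degree `k - 1` and any two
edges of `R` are seen by such a vertex: `R` spans at most one edge. Further applications show that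
there is one, and, with `ab` equal to it, that no more degrees are missing than parity forces.
-/

section Rayleigh

open Finset Matrix Module.End

variable {V : Type*} [Fintype V] [DecidableEq V] {A : Matrix V V ℝ} {μ : ℝ}

lemma setOf_hasEigenvalue_toLin'_eq_spectrum (A : Matrix V V ℝ) :
    {μ : ℝ | HasEigenvalue (toLin' A) μ} = spectrum ℝ A := by
  ext μ
  rw [← spectrum_toLin', ← hasEigenvalue_iff_mem_spectrum, Set.mem_ofPred_eq]

lemma isGreatest_sSup_eigenvalues [Nonempty V] (hA : A.IsHermitian) :
    IsGreatest {μ : ℝ | HasEigenvalue (toLin' A) μ}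
      (sSup {μ : ℝ | HasEigenvalue (toLin' A) μ}) := by
  rw [setOf_hasEigenvalue_toLin'_eq_spectrum, hA.spectrum_real_eq_range_eigenvalues]
  exact (Set.finite_range _).isCompact.isGreatest_sSup (Set.range_nonempty _)

lemma posSemidef_smul_one_sub (hA : A.IsHermitian)
    (hμ : μ ∈ upperBounds {ν : ℝ | HasEigenvalue (toLin' A) ν}) : (μ • 1 - A).PosSemidef := by
  rw [posSemidef_iff_isHermitian_and_spectrum_nonneg]
  refine ⟨(isHermitian_one.smul (IsSelfAdjoint.all μ)).sub hA, ?_⟩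
  rw [← Algebra.algebraMap_eq_smul_one, ← spectrum.singleton_sub_eq,
    ← setOf_hasEigenvalue_toLin'_eq_spectrum]
  rintro _ ⟨_, rfl, ν, hν, rfl⟩
  exact sub_nonneg.2 (hμ hν)

lemma dotProduct_smul_one_sub_mulVec (A : Matrix V V ℝ) (μ : ℝ) (x : V → ℝ) :
    x ⬝ᵥ (μ • 1 - A) *ᵥ x = μ * (x ⬝ᵥ x) - x ⬝ᵥ A *ᵥ x := by
  simp [sub_mulVec, smul_mulVec]

lemma dotProduct_mulVec_le_mul (hA : A.IsHermitian)
    (hμ : μ ∈ upperBounds {ν : ℝ | HasEigenvalue (toLin' A) ν}) (x : V → ℝ) :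
    x ⬝ᵥ A *ᵥ x ≤ μ * (x ⬝ᵥ x) := by
  have h := (posSemidef_smul_one_sub hA hμ).dotProduct_mulVec_nonneg x
  rw [star_trivial, dotProduct_smul_one_sub_mulVec] at h
  exact sub_nonneg.1 h

lemma mulVec_eq_smul_of_mul_le_dotProduct (hA : A.IsHermitian)
    (hμ : μ ∈ upperBounds {ν : ℝ | HasEigenvalue (toLin' A) ν}) {x : V → ℝ}
    (hx : μ * (x ⬝ᵥ x) ≤ x ⬝ᵥ A *ᵥ x) : A *ᵥ x = μ • x := by
  have h := (posSemidef_smul_one_sub hA hμ).dotProduct_mulVec_zero_iff x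
  rw [star_trivial, dotProduct_smul_one_sub_mulVec,
    (dotProduct_mulVec_le_mul hA hμ x).antisymm hx, sub_self] at h
  simpa [sub_mulVec, smul_mulVec, sub_eq_zero, eq_comm] using h

-- Replacing an extremal vector by its absolute value does not decrease the Rayleigh quotient.
lemma exists_nonneg_eigenvector [Nonempty V] (hA : A.IsHermitian) (hA₀ : ∀ i j, 0 ≤ A i j) :
    ∃ x : V → ℝ, x ≠ 0 ∧ 0 ≤ x ∧ A *ᵥ x = sSup {μ : ℝ | HasEigenvalue (toLin' A) μ} • x := by
  obtain ⟨hmem, hub⟩ := isGreatest_sSup_eigenvalues hA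
  set μ := sSup {μ : ℝ | HasEigenvalue (toLin' A) μ}
  obtain ⟨x, hx⟩ := hmem.exists_hasEigenvector
  have hAx : A *ᵥ x = μ • x := hx.apply_eq_smul
  refine ⟨|x|, by simpa using hx.2, abs_nonneg x, mulVec_eq_smul_of_mul_le_dotProduct hA hub ?_⟩
  calc μ * (|x| ⬝ᵥ |x|) = x ⬝ᵥ A *ᵥ x := by
        rw [hAx, dotProduct_smul, smul_eq_mul]
        simp only [dotProduct, Pi.abs_apply, abs_mul_abs_self]
    _ ≤ |x| ⬝ᵥ A *ᵥ |x| := by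
        simp only [dotProduct, mulVec, mul_sum, Pi.abs_apply]
        refine sum_le_sum fun i _ ↦ sum_le_sum fun j _ ↦ (le_abs_self _).trans_eq ?_
        rw [abs_mul, abs_mul, abs_of_nonneg (hA₀ i j)]

end Rayleigh

section WeightedDegree

open Finset Matrix

variable {n : ℕ} {G H : SimpleGraph (Fin n)} {A B : Finset (Fin n)} {x y : Fin n → ℝ} {v : Fin n}

/-- The sum of the weights `x u` over the neighbours `u` of `v` inside the set `A`: the weighted
version of `degIn`. For `A = univ` this is the `v`-th entry of the adjacency matrix applied to
`x`. -/
noncomputable def wdegIn (G : SimpleGraph (Fin n)) (A : Finset (Fin n)) (x : Fin n → ℝ)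
    (v : Fin n) : ℝ := by
  classical
  exact ∑ u ∈ A with G.Adj v u, x u

lemma wdegIn_eq_sum_ite [DecidableRel G.Adj] :
    wdegIn G A x v = ∑ u ∈ A, if G.Adj v u then x u else 0 := by
  rw [wdegIn, ← sum_filter]
  congr!

lemma wdegIn_one : wdegIn G A (fun _ ↦ 1) v = degIn G A v := by
  simp [wdegIn, degIn]

lemma wdegIn_union (h : Disjoint A B) : wdegIn G (A ∪ B) x v = wdegIn G A x v + wdegIn G B x v := by
  classical
  simp only [wdegIn_eq_sum_ite, sum_union h]

lemma wdegIn_add_wdegIn_compl (G : SimpleGraph (Fin n)) (A : Finset (Fin n)) (x : Fin n → ℝ)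
    (v : Fin n) : wdegIn G A x v + wdegIn G Aᶜ x v = wdegIn G univ x v := by
  rw [← wdegIn_union disjoint_compl_right, union_compl]

lemma wdegIn_eq_sum (h : ∀ u ∈ A, G.Adj v u) : wdegIn G A x v = ∑ u ∈ A, x u := by
  classical rw [wdegIn, filter_true_of_mem h]

lemma wdegIn_nonneg (hx : ∀ u ∈ A, 0 ≤ x u) : 0 ≤ wdegIn G A x v := by
  classical exact sum_nonneg fun u hu ↦ hx u (mem_filter.1 hu).1

lemma wdegIn_mono (h : ∀ u ∈ A, x u ≤ y u) : wdegIn G A x v ≤ wdegIn G A y v := by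
  classical exact sum_le_sum fun u hu ↦ h u (mem_filter.1 hu).1

lemma wdegIn_le_sum (hx : ∀ u ∈ A, 0 ≤ x u) : wdegIn G A x v ≤ ∑ u ∈ A, x u := by
  classical
  exact sum_le_sum_of_subset_of_nonneg (filter_subset _ _) fun u hu _ ↦ hx u hu

lemma wdegIn_le_wdegIn_of_adj (hx : ∀ u ∈ A, 0 ≤ x u) (h : ∀ u ∈ A, G.Adj v u → H.Adj v u) :
    wdegIn G A x v ≤ wdegIn H A x v := by
  classical
  simp only [wdegIn]
  refine sum_le_sum_of_subset_of_nonneg (fun u hu ↦ ?_) fun u hu _ ↦ hx u (mem_filter.1 hu).1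
  simp only [mem_filter] at hu ⊢
  exact ⟨hu.1, h u hu.1 hu.2⟩

lemma wdegIn_const_mul (c : ℝ) : wdegIn G A (fun u ↦ c * x u) v = c * wdegIn G A x v :=
  (mul_sum ..).symm

lemma wdegIn_le_degIn_mul {c : ℝ} (h : ∀ u ∈ A, x u ≤ c) : wdegIn G A x v ≤ degIn G A v * c := by
  refine (wdegIn_mono h).trans_eq ?_
  rw [mul_comm, ← wdegIn_one, ← wdegIn_const_mul]
  simp

lemma sum_mul_wdegIn_comm (G : SimpleGraph (Fin n)) (A B : Finset (Fin n)) (x y : Fin n → ℝ) :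
    ∑ v ∈ A, y v * wdegIn G B x v = ∑ u ∈ B, x u * wdegIn G A y u := by
  classical
  simp only [wdegIn_eq_sum_ite, mul_sum]
  rw [sum_comm]
  refine sum_congr rfl fun u _ ↦ sum_congr rfl fun v _ ↦ ?_
  simp [G.adj_comm, mul_comm]

lemma sum_degIn_comm (G : SimpleGraph (Fin n)) (A B : Finset (Fin n)) :
    ∑ v ∈ A, degIn G B v = ∑ v ∈ B, degIn G A v := by
  have h := sum_mul_wdegIn_comm G A B (fun _ ↦ 1) (fun _ ↦ 1)
  simp only [one_mul, wdegIn_one] at h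
  exact_mod_cast h

lemma adjMatrix_mulVec_apply_eq_wdegIn [DecidableRel G.Adj] :
    (G.adjMatrix ℝ *ᵥ x) v = wdegIn G univ x v := by
  rw [SimpleGraph.adjMatrix_mulVec_apply, wdegIn_eq_sum_ite, ← sum_filter,
    SimpleGraph.neighborFinset_eq_filter]

lemma degIn_eq_card_inter [DecidableRel G.Adj] : degIn G A v = #(A ∩ G.neighborFinset v) := by
  rw [degIn, G.neighborFinset_eq_filter, inter_filter, inter_univ]
  congr!

lemma degIn_mono (h : A ⊆ B) : degIn G A v ≤ degIn G B v := by
  classical exact card_le_card (filter_subset_filter _ h)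

lemma degIn_union (h : Disjoint A B) : degIn G (A ∪ B) v = degIn G A v + degIn G B v := by
  classical
  simp only [degIn, filter_union]
  exact card_union_of_disjoint (disjoint_filter_filter h)

end WeightedDegree

section SpectralRadius

open Finset Matrix Module.End

variable {n : ℕ} {G : SimpleGraph (Fin n)} {x : Fin n → ℝ}

lemma sum_mul_wdegIn_le_lam1_mul (G : SimpleGraph (Fin n)) (x : Fin n → ℝ) :
    ∑ v, x v * wdegIn G univ x v ≤ lam1 G * ∑ v, x v ^ 2 := by
  classical
  rcases isEmpty_or_nonempty (Fin n) with _ | _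
  · simp
  have hA : (G.adjMatrix ℝ).IsHermitian := G.isSymm_adjMatrix
  have h := dotProduct_mulVec_le_mul hA (isGreatest_sSup_eigenvalues hA).2 x
  simpa only [dotProduct, adjMatrix_mulVec_apply_eq_wdegIn, ← sq, lam1] using h

lemma wdegIn_univ_eq_lam1_mul_of_le (hx : lam1 G * ∑ v, x v ^ 2 ≤ ∑ v, x v * wdegIn G univ x v)
    (v : Fin n) : wdegIn G univ x v = lam1 G * x v := by
  classical
  have : Nonempty (Fin n) := ⟨v⟩
  have hA : (G.adjMatrix ℝ).IsHermitian := G.isSymm_adjMatrix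
  have h := mulVec_eq_smul_of_mul_le_dotProduct hA (isGreatest_sSup_eigenvalues hA).2 (x := x)
  simp only [dotProduct, adjMatrix_mulVec_apply_eq_wdegIn, ← sq, funext_iff] at h
  exact h hx v

/-- A Perron vector: a nonnegative eigenvector for the spectral radius, normalised to have maximum
entry `1`. -/
structure IsPerronVector (G : SimpleGraph (Fin n)) (x : Fin n → ℝ) : Prop where
  nonneg : ∀ v, 0 ≤ x v
  le_one : ∀ v, x v ≤ 1
  exists_eq_one : ∃ z, x z = 1
  wdegIn_univ : ∀ v, wdegIn G univ x v = lam1 G * x v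

lemma exists_isPerronVector (hn : 0 < n) (G : SimpleGraph (Fin n)) : ∃ x, IsPerronVector G x := by
  classical
  have : Nonempty (Fin n) := ⟨⟨0, hn⟩⟩
  have hA₀ (i j) : 0 ≤ G.adjMatrix ℝ i j := by rw [G.adjMatrix_apply]; split_ifs <;> norm_num
  have hA : (G.adjMatrix ℝ).IsHermitian := G.isSymm_adjMatrix
  obtain ⟨x, hx, hx₀, hAx⟩ := exists_nonneg_eigenvector hA hA₀
  have hwdeg (v) : wdegIn G univ x v = lam1 G * x v := by
    rw [← adjMatrix_mulVec_apply_eq_wdegIn, hAx]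
    rfl
  obtain ⟨z, hz⟩ := Finite.exists_max x
  have hz₀ : 0 < x z := by
    obtain ⟨v, hv⟩ := Function.ne_iff.1 hx
    exact ((hx₀ v).lt_of_ne' hv).trans_le (hz v)
  refine ⟨fun v ↦ (x z)⁻¹ * x v, fun v ↦ mul_nonneg (inv_nonneg.2 hz₀.le) (hx₀ v),
    fun v ↦ ?_, ⟨z, inv_mul_cancel₀ hz₀.ne'⟩, fun v ↦ ?_⟩
  · rw [inv_mul_le_one₀ hz₀]; exact hz v
  · rw [wdegIn_const_mul, hwdeg, mul_left_comm]

end SpectralRadius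

section Wheel

open Finset Function

variable {V : Type*} {G : SimpleGraph V} {h : V}

lemma containsCopy_wheelGraph_iff {m : ℕ} (hm : 2 ≤ m) :
    ContainsCopy (wheelGraph (m + 2)) G ↔
      ∃ (h : V) (g : Fin (m + 1) → V), Injective g ∧ (∀ i, G.Adj h (g i)) ∧
        ∀ i, G.Adj (g i) (g (i + 1)) := by
  constructor
  · rintro ⟨f, hf⟩
    refine ⟨f 0, fun i ↦ f i.succ, f.injective.comp (Fin.succ_injective _),
      fun i ↦ hf _ _ ⟨(Fin.succ_ne_zero i).symm, Or.inl rfl⟩, fun i ↦ hf _ _ ⟨?_, ?_⟩⟩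
    · simp only [ne_eq, Fin.ext_iff, Fin.val_succ, Fin.val_add_one, Fin.val_last]
      split_ifs <;> omega
    · simp only [Fin.val_succ, Fin.val_add_one, Fin.ext_iff, Fin.val_last]
      split_ifs <;> omega
  · rintro ⟨h, g, hg, hh, hc⟩
    have hstep {i j : Fin (m + 1)} (hij : i.val + 1 = j ∨ j.val = 0 ∧ i.val = m) :
        G.Adj (g i) (g j) := by
      convert hc i
      simp only [Fin.ext_iff, Fin.val_add_one, Fin.val_last]
      split_ifs <;> omega
    refine ⟨⟨Fin.cons h g, Fin.cons_injective_iff.2 ⟨?_, hg⟩⟩, fun a b hab ↦ ?_⟩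
    · rintro ⟨i, hi⟩
      exact (hh i).ne hi.symm
    · obtain ⟨hne, hab⟩ := hab
      induction a using Fin.cases <;> induction b using Fin.cases
      · exact absurd rfl hne
      · exact hh _
      · exact (hh _).symm
      · rename_i i j
        simp only [Fin.val_succ] at hab
        rcases (by omega : (i.val + 1 = j ∨ j.val = 0 ∧ i.val = m) ∨
          (j.val + 1 = i ∨ i.val = 0 ∧ j.val = m)) with hij | hij
        · exact hstep hij
        · exact (hstep hij).symm

lemma containsCopy_wheelGraph_length {a : V} {l : List V} (hl : 2 ≤ l.length)
    (hchain : (a :: l).IsChain G.Adj) (hnodup : (a :: l).Nodup)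
    (hlast : G.Adj ((a :: l).getLast (l.cons_ne_nil a)) a) (hh : ∀ v ∈ a :: l, G.Adj h v) :
    ContainsCopy (wheelGraph (l.length + 2)) G := by
  refine (containsCopy_wheelGraph_iff hl).2
    ⟨h, (a :: l).get, List.nodup_iff_injective_get.1 hnodup, fun i ↦ hh _ (List.get_mem ..),
      fun i ↦ ?_⟩
  simp only [List.get_eq_getElem, Fin.val_add_one]
  split_ifs with hi
  · simpa [hi, List.getLast_eq_getElem] using hlast
  · exact hchain.getElem _ _

variable {A B : Finset V}

lemma card_sub_length_le_card_filter_notMem [DecidableEq V] (A : Finset V) (l : List V) :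
    #A - l.length ≤ #{v ∈ A | v ∉ l} := by
  have : A \ l.toFinset = {v ∈ A | v ∉ l} := by ext v; simp
  rw [← this]
  exact (Nat.sub_le_sub_left l.toFinset_card_le _).trans (le_card_sdiff ..)

-- The rim of the wheel prolongs the path `a :: l` by alternating between `A` and `B`.
lemma containsCopy_wheelGraph_of_isChain [DecidableEq V] {k : ℕ} (hk : 2 ≤ k)
    (hA : ∀ a ∈ A, G.Adj h a) (hB : ∀ b ∈ B, G.Adj h b) (hAB : ∀ a ∈ A, ∀ b ∈ B, G.Adj a b)
    (m : ℕ) {a : V} {l : List V} (ha : a ∈ A) (hl : ∀ v ∈ l, G.Adj h v)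
    (hlast : (a :: l).getLast (l.cons_ne_nil a) ∈ B) (hchain : (a :: l).IsChain G.Adj)
    (hnodup : (a :: l).Nodup) (hlen : l.length + 1 + 2 * m = 2 * k)
    (hmA : m ≤ #{v ∈ A | v ∉ a :: l}) (hmB : m ≤ #{v ∈ B | v ∉ a :: l}) :
    ContainsCopy (wheelGraph (2 * k + 1)) G := by
  induction m generalizing a l with
  | zero =>
    rw [← hlen]
    exact containsCopy_wheelGraph_length (by omega) hchain hnodup
      (hAB a ha _ hlast).symm (List.forall_mem_cons.2 ⟨hA a ha, hl⟩)
  | succ m ih =>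
    obtain ⟨a', ha'⟩ := card_pos.1 (m.succ_pos.trans_le hmA)
    obtain ⟨b', hb'⟩ := card_pos.1 (m.succ_pos.trans_le hmB)
    simp only [mem_filter] at ha' hb'
    have hAB' := hAB a' ha'.1 b' hb'.1
    have hA' : {v ∈ A | v ∉ a' :: b' :: a :: l} = ({v ∈ A | v ∉ a :: l}).erase a' := by
      ext v; have := fun hv ↦ (hAB v hv b' hb'.1).ne; grind
    have hB' : {v ∈ B | v ∉ a' :: b' :: a :: l} = ({v ∈ B | v ∉ a :: l}).erase b' := by
      ext v; have := fun hv ↦ (hAB a' ha'.1 v hv).ne; grind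
    apply ih (a := a') (l := b' :: a :: l) ha'.1
    · simp only [List.forall_mem_cons]
      exact ⟨hB b' hb'.1, hA a ha, hl⟩
    · simpa only [List.getLast_cons_cons] using hlast
    · exact (hchain.cons_cons (hAB a ha b' hb'.1).symm).cons_cons hAB'
    · have := hAB'.ne
      grind
    · simp only [List.length_cons]; omega
    · rw [hA']
      exact (Nat.le_sub_one_of_lt hmA).trans pred_card_le_card_erase
    · rw [hB']
      exact (Nat.le_sub_one_of_lt hmB).trans pred_card_le_card_erase

lemma containsCopy_wheelGraph_of_complete_bipartite {k : ℕ} (hk : 2 ≤ k) (hA : ∀ a ∈ A, G.Adj h a)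
    (hB : ∀ b ∈ B, G.Adj h b) (hAB : ∀ a ∈ A, ∀ b ∈ B, G.Adj a b) (hkA : k ≤ #A) (hkB : k ≤ #B) :
    ContainsCopy (wheelGraph (2 * k + 1)) G := by
  classical
  obtain ⟨a, ha⟩ := card_pos.1 (by omega : 0 < #A)
  obtain ⟨b, hb⟩ := card_pos.1 (by omega : 0 < #B)
  have hab := hAB a ha b hb
  have hA' : {v ∈ A | v ∉ [a, b]} = A.erase a := by
    ext v; have := fun hv ↦ (hAB v hv b hb).ne; grind
  have hB' : {v ∈ B | v ∉ [a, b]} = B.erase b := by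
    ext v; have := fun hv ↦ (hAB a ha v hv).ne; grind
  refine containsCopy_wheelGraph_of_isChain hk hA hB hAB (k - 1) (l := [b]) ha ?_ hb ?_ ?_ ?_ ?_ ?_
  · simpa using hB b hb
  · simpa using hab
  · simpa using hab.ne
  · simp only [List.length_singleton]; omega
  · rw [hA', card_erase_of_mem ha]; omega
  · rw [hB', card_erase_of_mem hb]; omega

lemma containsCopy_wheelGraph_of_path {k : ℕ} (hk : 2 ≤ k) (hA : ∀ a ∈ A, G.Adj h a)
    (hB : ∀ b ∈ B, G.Adj h b) (hAB : ∀ a ∈ A, ∀ b ∈ B, G.Adj a b) (hkA : k - 1 ≤ #A)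
    (hkB : k + 1 ≤ #B) {b₁ b₂ b₃ : V} (hb₁ : b₁ ∈ B) (hb₂ : b₂ ∈ B) (hb₃ : b₃ ∈ B)
    (h₁₂ : G.Adj b₁ b₂) (h₂₃ : G.Adj b₂ b₃) (h₁₃ : b₁ ≠ b₃) :
    ContainsCopy (wheelGraph (2 * k + 1)) G := by
  classical
  obtain ⟨a, ha⟩ := card_pos.1 (by omega : 0 < #A)
  have hne (b) (hb : b ∈ B) : a ≠ b := (hAB a ha b hb).ne
  have hA' : {v ∈ A | v ∉ [a]} ⊆ {v ∈ A | v ∉ [a, b₁, b₂, b₃]} := by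
    intro v hv
    have := fun b hb ↦ (hAB v (mem_filter.1 hv).1 b hb).ne
    simp only [mem_filter, List.mem_cons, List.not_mem_nil] at hv ⊢
    grind
  have hB' : {v ∈ B | v ∉ [b₁, b₂, b₃]} ⊆ {v ∈ B | v ∉ [a, b₁, b₂, b₃]} := by
    intro v hv
    have := hne v
    simp only [mem_filter, List.mem_cons, List.not_mem_nil] at hv ⊢
    grind
  refine containsCopy_wheelGraph_of_isChain hk hA hB hAB (k - 2) (l := [b₁, b₂, b₃]) ha ?_ hb₃
    ?_ ?_ ?_ (le_trans ?_ (card_le_card hA')) (le_trans ?_ (card_le_card hB'))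
  · simpa using ⟨hB b₁ hb₁, hB b₂ hb₂, hB b₃ hb₃⟩
  · simpa using ⟨hAB a ha b₁ hb₁, h₁₂, h₂₃⟩
  · simpa using ⟨⟨hne b₁ hb₁, hne b₂ hb₂, hne b₃ hb₃⟩, ⟨h₁₂.ne, h₁₃⟩, h₂₃.ne⟩
  · simp only [List.length_cons, List.length_nil]; omega
  · refine le_trans ?_ (card_sub_length_le_card_filter_notMem ..)
    simp only [List.length_cons, List.length_nil]
    omega
  · refine le_trans ?_ (card_sub_length_le_card_filter_notMem ..)
    simp only [List.length_cons, List.length_nil]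
    omega

lemma containsCopy_wheelGraph_of_two_edges {k : ℕ} (hk : 3 ≤ k) (hA : ∀ a ∈ A, G.Adj h a)
    (hB : ∀ b ∈ B, G.Adj h b) (hAB : ∀ a ∈ A, ∀ b ∈ B, G.Adj a b) (hkA : k - 1 ≤ #A)
    (hkB : k + 1 ≤ #B) {b₁ b₂ b₃ b₄ : V} (hb₁ : b₁ ∈ B) (hb₂ : b₂ ∈ B) (hb₃ : b₃ ∈ B)
    (hb₄ : b₄ ∈ B) (h₁₂ : G.Adj b₁ b₂) (h₃₄ : G.Adj b₃ b₄) (h₁₃ : b₁ ≠ b₃) (h₁₄ : b₁ ≠ b₄)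
    (h₂₃ : b₂ ≠ b₃) (h₂₄ : b₂ ≠ b₄) : ContainsCopy (wheelGraph (2 * k + 1)) G := by
  classical
  obtain ⟨a, ha, a', ha', haa'⟩ := one_lt_card.1 (by omega : 1 < #A)
  have hne {a b} (ha : a ∈ A) (hb : b ∈ B) : a ≠ b := (hAB a ha b hb).ne
  have hA' : {v ∈ A | v ∉ [a, a']} ⊆ {v ∈ A | v ∉ [a, b₁, b₂, a', b₃, b₄]} := by
    intro v hv
    have := fun b hb ↦ hne (b := b) (mem_filter.1 hv).1 hb
    simp only [mem_filter, List.mem_cons, List.not_mem_nil] at hv ⊢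
    grind
  have hB' : {v ∈ B | v ∉ [b₁, b₂, b₃, b₄]} ⊆ {v ∈ B | v ∉ [a, b₁, b₂, a', b₃, b₄]} := by
    intro v hv
    have := hne (b := v) ha
    have := hne (b := v) ha'
    simp only [mem_filter, List.mem_cons, List.not_mem_nil] at hv ⊢
    grind
  refine containsCopy_wheelGraph_of_isChain (by omega) hA hB hAB (k - 3)
    (l := [b₁, b₂, a', b₃, b₄]) ha ?_ hb₄ ?_ ?_ ?_ (le_trans ?_ (card_le_card hA'))
    (le_trans ?_ (card_le_card hB'))
  · simpa using ⟨hB b₁ hb₁, hB b₂ hb₂, hA a' ha', hB b₃ hb₃, hB b₄ hb₄⟩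
  · simpa using ⟨hAB a ha b₁ hb₁, h₁₂, (hAB a' ha' b₂ hb₂).symm, hAB a' ha' b₃ hb₃, h₃₄⟩
  · simpa using ⟨⟨hne ha hb₁, hne ha hb₂, haa', hne ha hb₃, hne ha hb₄⟩,
      ⟨h₁₂.ne, (hne ha' hb₁).symm, h₁₃, h₁₄⟩, ⟨(hne ha' hb₂).symm, h₂₃, h₂₄⟩,
      ⟨hne ha' hb₃, hne ha' hb₄⟩, h₃₄.ne⟩
  · simp only [List.length_cons, List.length_nil]; omega
  · refine le_trans ?_ (card_sub_length_le_card_filter_notMem ..)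
    simp only [List.length_cons, List.length_nil]
    omega
  · refine le_trans ?_ (card_sub_length_le_card_filter_notMem ..)
    simp only [List.length_cons, List.length_nil]
    omega

end Wheel

section LocalSparsity

open Finset Filter

variable {n k : ℕ} {G : SimpleGraph (Fin n)} [DecidableRel G.Adj]

lemma WheelFree.card_filter_subset_neighborFinset_le (hk : 2 ≤ k) (hG : WheelFree (2 * k + 1) G)
    {v : Fin n} {S : Finset (Fin n)} (hS : S ⊆ G.neighborFinset v) (hcard : k ≤ #S) :
    #{u ∈ G.neighborFinset v | S ⊆ G.neighborFinset u} ≤ k := by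
  by_contra! hlt
  refine hG (containsCopy_wheelGraph_of_complete_bipartite hk (h := v) (A := S) (fun a ha ↦ ?_)
    (fun b hb ↦ ?_) (fun a ha b hb ↦ ?_) hcard hlt.le)
  · simpa using hS ha
  · simpa using (mem_filter.1 hb).1
  · simpa [G.adj_comm] using (mem_filter.1 hb).2 ha

lemma WheelFree.sum_choose_degIn_le (hk : 2 ≤ k) (hG : WheelFree (2 * k + 1) G) (v : Fin n) :
    ∑ u ∈ G.neighborFinset v, (degIn G (G.neighborFinset v) u).choose k ≤ k * n.choose k := by
  set A := G.neighborFinset v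
  have hdouble : ∑ u ∈ A, (degIn G A u).choose k
      = ∑ S ∈ A.powersetCard k, #{u ∈ A | S ⊆ G.neighborFinset u} := by
    refine (sum_congr rfl fun u _ ↦ ?_).trans
      (sum_card_bipartiteAbove_eq_sum_card_bipartiteBelow fun u S ↦ S ⊆ G.neighborFinset u)
    rw [degIn_eq_card_inter, ← card_powersetCard]
    congr 1
    ext S
    simp only [mem_powersetCard, mem_bipartiteAbove, subset_inter_iff]
    tauto
  calc ∑ u ∈ A, (degIn G A u).choose k ≤ #(A.powersetCard k) • k := by
        rw [hdouble]
        refine sum_le_card_nsmul _ _ k fun S hS ↦ ?_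
        obtain ⟨hSA, hSk⟩ := mem_powersetCard.1 hS
        exact hG.card_filter_subset_neighborFinset_le hk hSA hSk.ge
    _ ≤ k * n.choose k := by
        rw [card_powersetCard, smul_eq_mul, mul_comm]
        gcongr
        simpa using card_le_univ A

lemma WheelFree.sum_pow_degIn_le (hk : 2 ≤ k) (hG : WheelFree (2 * k + 1) G) (v : Fin n) :
    ∑ u ∈ G.neighborFinset v, (degIn G (G.neighborFinset v) u + 1 - k) ^ k ≤ k * n ^ k :=
  calc ∑ u ∈ G.neighborFinset v, (degIn G (G.neighborFinset v) u + 1 - k) ^ k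
      ≤ ∑ u ∈ G.neighborFinset v, (degIn G (G.neighborFinset v) u).descFactorial k :=
        sum_le_sum fun _ _ ↦ Nat.pow_sub_le_descFactorial _ _
    _ = k.factorial * ∑ u ∈ G.neighborFinset v, (degIn G (G.neighborFinset v) u).choose k := by
        simp only [Nat.descFactorial_eq_factorial_mul_choose, mul_sum]
    _ ≤ k.factorial * (k * n.choose k) := by gcongr; exact hG.sum_choose_degIn_le hk v
    _ = k * n.descFactorial k := by rw [Nat.descFactorial_eq_factorial_mul_choose]; ring
    _ ≤ k * n ^ k := by gcongr; exact n.descFactorial_le_pow k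

lemma pow_mul_le_of_sum_pow_le {ι : Type*} {s : Finset ι} {f : ι → ℝ} {γ c : ℝ} (hγ : 0 ≤ γ)
    (hn : 0 < n) (hk : k ≠ 0) (hf : ∀ i ∈ s, 0 ≤ f i) (hs : #s ≤ n)
    (hpow : ∑ i ∈ s, f i ^ k ≤ c * n ^ k) (hsum : γ * n ^ 2 ≤ ∑ i ∈ s, f i) : γ ^ k * n ≤ c := by
  obtain ⟨m, rfl⟩ := Nat.exists_eq_succ_of_ne_zero hk
  have : (0 : ℝ) < n := by exact_mod_cast hn
  have hmean : (∑ i ∈ s, f i) ^ (m + 1) ≤ #s ^ m * ∑ i ∈ s, f i ^ (m + 1) :=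
    pow_sum_le_card_mul_sum_pow hf m
  have h : γ ^ (m + 1) * n * (n ^ m * n ^ (m + 1)) ≤ c * ((n : ℝ) ^ m * n ^ (m + 1)) :=
    calc γ ^ (m + 1) * n * (n ^ m * n ^ (m + 1)) = (γ * (n : ℝ) ^ 2) ^ (m + 1) := by ring
      _ ≤ (∑ i ∈ s, f i) ^ (m + 1) := by gcongr
      _ ≤ #s ^ m * ∑ i ∈ s, f i ^ (m + 1) := hmean
      _ ≤ n ^ m * (c * n ^ (m + 1)) := by
        gcongr
        exact sum_nonneg fun i hi ↦ pow_nonneg (hf i hi) _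
      _ = c * ((n : ℝ) ^ m * n ^ (m + 1)) := by ring
  exact le_of_mul_le_mul_right h (by positivity)

lemma eventually_sum_degIn_neighborFinset_le (hk : 2 ≤ k) {γ : ℝ} (hγ : 0 < γ) :
    ∀ᶠ n : ℕ in atTop, ∀ (G : SimpleGraph (Fin n)) [DecidableRel G.Adj], WheelFree (2 * k + 1) G →
      ∀ v, ∑ u ∈ G.neighborFinset v, (degIn G (G.neighborFinset v) u : ℝ) ≤ γ * n ^ 2 := by
  filter_upwards [eventually_gt_atTop 0, eventually_gt_atTop ⌈k / (γ / 2)⌉₊,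
    eventually_gt_atTop ⌈k / (γ / 2) ^ k⌉₊] with n hn h₁ h₂ G _ hG v
  replace h₁ := (div_lt_iff₀' (half_pos hγ)).1 (Nat.lt_of_ceil_lt h₁)
  replace h₂ := (div_lt_iff₀' (pow_pos (half_pos hγ) k)).1 (Nat.lt_of_ceil_lt h₂)
  set A := G.neighborFinset v
  have hcard : #A ≤ n := by simpa using card_le_univ A
  by_contra! hlt
  refine h₂.not_ge (pow_mul_le_of_sum_pow_le (half_pos hγ).le hn (by omega)
    (f := fun u ↦ ((degIn G A u + 1 - k : ℕ) : ℝ)) (fun _ _ ↦ Nat.cast_nonneg _) hcard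
    (mod_cast hG.sum_pow_degIn_le hk v) ?_)
  calc γ / 2 * n ^ 2 = γ * n ^ 2 - γ / 2 * n * n := by ring
    _ ≤ ∑ u ∈ A, (degIn G A u : ℝ) - k * #A := by gcongr
    _ = ∑ u ∈ A, ((degIn G A u : ℝ) - k) := by
      rw [sum_sub_distrib, sum_const, nsmul_eq_mul, mul_comm]
    _ ≤ ∑ u ∈ A, ((degIn G A u + 1 - k : ℕ) : ℝ) := by
      refine sum_le_sum fun u _ ↦ ?_
      rw [sub_le_iff_le_add]
      exact_mod_cast (by omega : degIn G A u ≤ degIn G A u + 1 - k + k)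

end LocalSparsity

section Cuts

open Finset

variable {n k : ℕ} {G : SimpleGraph (Fin n)} {L R S : Finset (Fin n)} {u v : Fin n}

/-- The number of non-neighbours of `v` inside the set `A`. It counts `v` itself if `v ∈ A`, but is
only of interest when `v` lies on the other side of a cut. -/
noncomputable def codegIn (G : SimpleGraph (Fin n)) (A : Finset (Fin n)) (v : Fin n) : ℕ := by
  classical
  exact #{u ∈ A | ¬G.Adj v u}

lemma degIn_add_codegIn (G : SimpleGraph (Fin n)) (A : Finset (Fin n)) (v : Fin n) :
    degIn G A v + codegIn G A v = #A := by
  classical exact card_filter_add_card_filter_not (G.Adj v)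

lemma sum_codegIn_comm (G : SimpleGraph (Fin n)) (A B : Finset (Fin n)) :
    ∑ v ∈ A, codegIn G B v = ∑ v ∈ B, codegIn G A v := by
  have hA : ∑ v ∈ A, degIn G B v + ∑ v ∈ A, codegIn G B v = #A * #B := by
    simp [← sum_add_distrib, degIn_add_codegIn]
  have hB : ∑ v ∈ B, degIn G A v + ∑ v ∈ B, codegIn G A v = #B * #A := by
    simp [← sum_add_distrib, degIn_add_codegIn]
  rw [sum_degIn_comm] at hA
  linarith

lemma cutCount_eq_sum_degIn (G : SimpleGraph (Fin n)) (S : Finset (Fin n)) :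
    cutCount G S = ∑ u ∈ S, degIn G Sᶜ u := by
  classical
  simp only [cutCount, degIn, ← card_sigma]
  refine card_bij' (fun p _ ↦ ⟨p.1, p.2⟩) (fun p _ ↦ (p.1, p.2)) (fun p hp ↦ ?_) (fun p hp ↦ ?_)
    (fun _ _ ↦ rfl) (fun _ _ ↦ rfl)
  · simpa [and_comm, and_assoc] using hp
  · simpa [and_comm, and_assoc] using hp

lemma cutCount_compl (G : SimpleGraph (Fin n)) (S : Finset (Fin n)) :
    cutCount G Sᶜ = cutCount G S := by
  rw [cutCount_eq_sum_degIn, cutCount_eq_sum_degIn, compl_compl, sum_degIn_comm]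

lemma cutCount_add_sum_codegIn (G : SimpleGraph (Fin n)) (S : Finset (Fin n)) :
    cutCount G S + ∑ u ∈ S, codegIn G Sᶜ u = #S * #Sᶜ := by
  simp [cutCount_eq_sum_degIn, ← sum_add_distrib, degIn_add_codegIn]

lemma cast_card_compl (S : Finset (Fin n)) : (#Sᶜ : ℝ) = n - #S := by
  rw [eq_sub_iff_add_eq]
  exact_mod_cast by simp

-- The two terms on the left measure how far `G` is from a balanced complete bipartite graph.
lemma sq_card_sub_half_add_sum_codegIn (G : SimpleGraph (Fin n)) (S : Finset (Fin n)) :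
    (#S - n / 2 : ℝ) ^ 2 + ∑ u ∈ S, (codegIn G Sᶜ u : ℝ) = n ^ 2 / 4 - cutCount G S := by
  have h : (cutCount G S : ℝ) + ∑ u ∈ S, (codegIn G Sᶜ u : ℝ) = #S * #Sᶜ :=
    mod_cast cutCount_add_sum_codegIn G S
  rw [cast_card_compl] at h
  linear_combination h

lemma cutCount_erase_add_degIn (hv : v ∈ L) :
    cutCount G (L.erase v) + degIn G Lᶜ v = cutCount G L + degIn G L v := by
  have hdeg (u : Fin n) : degIn G (L.erase v)ᶜ u = degIn G {v} u + degIn G Lᶜ u := by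
    rw [compl_erase, insert_eq, degIn_union (by simp [hv])]
  have hself : degIn G {v} v = 0 := by simp [degIn]
  have hsum : ∑ u ∈ L, degIn G {v} u = degIn G L v := by rw [sum_degIn_comm, sum_singleton]
  have herase : ∑ u ∈ L.erase v, degIn G {v} u = ∑ u ∈ L, degIn G {v} u := by
    rw [← add_sum_erase L _ hv, hself, zero_add]
  rw [cutCount_eq_sum_degIn, cutCount_eq_sum_degIn]
  simp only [hdeg, sum_add_distrib]
  rw [herase, hsum, ← sum_erase_add L _ hv]
  ring

lemma IsMaxCut.symm (h : IsMaxCut G L R) : IsMaxCut G R L := by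
  obtain ⟨rfl, h⟩ := h
  exact ⟨(compl_compl L).symm, fun S' ↦ by rw [cutCount_compl]; exact h S'⟩

lemma IsMaxCut.degIn_le_degIn (h : IsMaxCut G L R) (hv : v ∈ L) :
    degIn G L v ≤ degIn G R v := by
  obtain ⟨rfl, h⟩ := h
  have := cutCount_erase_add_degIn (G := G) hv
  have := h (L.erase v)
  omega

variable [DecidableRel G.Adj]

lemma IsMaxCut.sq_degIn_le (h : IsMaxCut G L R) (hv : v ∈ L) :
    degIn G L v ^ 2 ≤ ∑ u ∈ G.neighborFinset v, degIn G (G.neighborFinset v) u +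
      ∑ u ∈ L, codegIn G R u := by
  set N := G.neighborFinset v
  have hu (u : Fin n) : degIn G L v ≤ degIn G N u + codegIn G R u := by
    have hunion : #(R ∩ N ∪ R ∩ G.neighborFinset u) ≤ #R :=
      card_le_card (union_subset inter_subset_left inter_subset_left)
    have hinter : #(R ∩ N ∩ (R ∩ G.neighborFinset u)) ≤ #(N ∩ G.neighborFinset u) :=
      card_le_card (inter_subset_inter inter_subset_right inter_subset_right)
    have hcard := card_union_add_card_inter (R ∩ N) (R ∩ G.neighborFinset u)
    have hco : #(R ∩ G.neighborFinset u) + codegIn G R u = #R := by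
      rw [← degIn_eq_card_inter, degIn_add_codegIn]
    have hmax : degIn G L v ≤ #(R ∩ N) := (h.degIn_le_degIn hv).trans_eq degIn_eq_card_inter
    rw [degIn_eq_card_inter (A := N)]
    omega
  calc degIn G L v ^ 2 = ∑ _u ∈ L ∩ N, degIn G L v := by
        rw [sum_const, smul_eq_mul, ← degIn_eq_card_inter, sq]
    _ ≤ ∑ u ∈ L ∩ N, degIn G N u + ∑ u ∈ L ∩ N, codegIn G R u := by
        rw [← sum_add_distrib]
        exact sum_le_sum fun _ _ ↦ hu _
    _ ≤ ∑ u ∈ N, degIn G N u + ∑ u ∈ L, codegIn G R u := by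
        gcongr
        · exact inter_subset_right
        · exact inter_subset_left

end Cuts

section Stability

open Finset Filter

variable {n k : ℕ} {G : SimpleGraph (Fin n)} {L R S : Finset (Fin n)} {θ : ℝ}

lemma two_mul_cutCount_le_lam1_mul (G : SimpleGraph (Fin n)) (S : Finset (Fin n)) :
    2 * (cutCount G S : ℝ) ≤ lam1 G * n := by
  have hS : 2 * cutCount G S ≤ ∑ v, degIn G univ v := by
    rw [two_mul, ← sum_add_sum_compl S]
    nth_rw 2 [← cutCount_compl]
    simp only [cutCount_eq_sum_degIn]
    gcongr <;> exact degIn_mono (subset_univ _)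
  calc 2 * (cutCount G S : ℝ) ≤ ∑ v, (degIn G univ v : ℝ) := mod_cast hS
    _ ≤ lam1 G * n := by simpa [wdegIn_one] using sum_mul_wdegIn_le_lam1_mul G fun _ ↦ 1

lemma wheelFree_of_cliqueFree_three (hk : 2 ≤ k) (hG : G.CliqueFree 3) :
    WheelFree (2 * k + 1) G := by
  classical
  obtain ⟨m, hm, hkm⟩ : ∃ m, 2 ≤ m ∧ 2 * k + 1 = m + 2 := ⟨2 * k - 1, by omega, by omega⟩
  rw [WheelFree, hkm, containsCopy_wheelGraph_iff hm]
  rintro ⟨h, g, -, hh, hc⟩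
  exact hG _ (SimpleGraph.is3Clique_triple_iff.2 ⟨hh 0, hh (0 + 1), hc 0⟩)

lemma IsSpexWheel.two_mul_card_mul_card_le (hk : 2 ≤ k) (hG : IsSpexWheel (2 * k + 1) G)
    (S : Finset (Fin n)) : 2 * (#S * #Sᶜ : ℝ) ≤ lam1 G * n := by
  set H : SimpleGraph (Fin n) := (⊤ : SimpleGraph Prop).comap (· ∈ S)
  have hH : H.CliqueFree 3 := by
    have hcol : H.Coloring Prop := SimpleGraph.Coloring.mk (· ∈ S) fun h ↦ h
    exact (by simpa using hcol.colorable : H.Colorable 2).cliqueFree (by norm_num)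
  have hcodeg : ∑ u ∈ S, codegIn H Sᶜ u = 0 := by
    refine sum_eq_zero fun u hu ↦ ?_
    simp [codegIn, H, hu]
  calc 2 * (#S * #Sᶜ : ℝ) = 2 * (cutCount H S : ℝ) := by
        have := cutCount_add_sum_codegIn H S
        rw [hcodeg, add_zero] at this
        exact_mod_cast congrArg (2 * ·) this.symm
    _ ≤ lam1 H * n := two_mul_cutCount_le_lam1_mul H S
    _ ≤ lam1 G * n := by
        gcongr
        exact hG.2 H (wheelFree_of_cliqueFree_three hk hH)

lemma IsSpexWheel.half_sub_one_le_lam1 (hk : 2 ≤ k) (hn : 0 < n) (hG : IsSpexWheel (2 * k + 1) G) :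
    (n / 2 - 1 : ℝ) ≤ lam1 G := by
  obtain ⟨S, -, hS⟩ := exists_subset_card_eq (s := (univ : Finset (Fin n))) (n := n / 2)
    (by simpa using n.div_le_self 2)
  have h := hG.two_mul_card_mul_card_le hk S
  rw [cast_card_compl, hS] at h
  have hn' : (0 : ℝ) < n := mod_cast hn
  have h₁ : (n : ℝ) ≤ 2 * (n / 2 : ℕ) + 1 := mod_cast (by omega)
  have h₂ : 2 * ((n / 2 : ℕ) : ℝ) ≤ n := mod_cast (by omega)
  refine le_of_mul_le_mul_right (le_trans ?_ h) hn'
  nlinarith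

lemma exists_sq_lam1_le_sum_degIn [DecidableRel G.Adj] (hn : 0 < n) :
    ∃ z, lam1 G ^ 2 ≤ ∑ u ∈ G.neighborFinset z, (degIn G univ u : ℝ) := by
  obtain ⟨x, hx⟩ := exists_isPerronVector hn G
  obtain ⟨z, hz⟩ := hx.exists_eq_one
  have hlam : lam1 G = ∑ u ∈ G.neighborFinset z, x u := by
    rw [← mul_one (lam1 G), ← hz, ← hx.wdegIn_univ, wdegIn, G.neighborFinset_eq_filter]
    congr!
  refine ⟨z, ?_⟩
  calc lam1 G ^ 2 = ∑ u ∈ G.neighborFinset z, wdegIn G univ x u := by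
        simp only [hx.wdegIn_univ, ← mul_sum, ← hlam, sq]
    _ ≤ ∑ u ∈ G.neighborFinset z, (degIn G univ u : ℝ) := by
        gcongr with u
        rw [← wdegIn_one]
        exact wdegIn_mono fun w _ ↦ hx.le_one w

lemma IsMaxCut.sq_lam1_le [DecidableRel G.Adj] {c : ℝ} (hLR : IsMaxCut G L R) (hn : 0 < n)
    (hc : ∀ v, ∑ u ∈ G.neighborFinset v, (degIn G (G.neighborFinset v) u : ℝ) ≤ c) :
    lam1 G ^ 2 ≤ c + cutCount G L := by
  obtain ⟨z, hz⟩ := exists_sq_lam1_le_sum_degIn (G := G) hn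
  set N := G.neighborFinset z
  calc lam1 G ^ 2 ≤ ∑ u ∈ N, (degIn G univ u : ℝ) := hz
    _ = ∑ u ∈ N, (degIn G N u : ℝ) + cutCount G N := by
        rw [cutCount_eq_sum_degIn, Nat.cast_sum, ← sum_add_distrib]
        refine sum_congr rfl fun u _ ↦ ?_
        rw [← union_compl N, degIn_union disjoint_compl_right, Nat.cast_add]
    _ ≤ c + cutCount G L := add_le_add (hc z) (mod_cast hLR.2 N)

/-- A partition of the vertices exhibiting `G` as close, in the `θ`-approximate sense, to a
balanced complete bipartite graph: the parts are almost balanced, few edges between them are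
missing in total, and every vertex has small internal degree. -/
structure IsStablePartition (G : SimpleGraph (Fin n)) (θ : ℝ) (L R : Finset (Fin n)) : Prop where
  eq_compl : R = Lᶜ
  card_left : #L ≤ (1 / 2 + θ) * n
  card_right : #R ≤ (1 / 2 + θ) * n
  sum_codegIn : ∑ u ∈ L, (codegIn G R u : ℝ) ≤ θ ^ 2 * n ^ 2
  degIn_left : ∀ v ∈ L, degIn G L v ≤ θ * n
  degIn_right : ∀ v ∈ R, degIn G R v ≤ θ * n

lemma IsStablePartition.symm (h : IsStablePartition G θ L R) : IsStablePartition G θ R L where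
  eq_compl := by rw [h.eq_compl, compl_compl]
  card_left := h.card_right
  card_right := h.card_left
  sum_codegIn := by
    have hsum : ∑ u ∈ R, (codegIn G L u : ℝ) = ∑ u ∈ L, (codegIn G R u : ℝ) :=
      mod_cast sum_codegIn_comm G R L
    exact hsum.trans_le h.sum_codegIn
  degIn_left := h.degIn_right
  degIn_right := h.degIn_left

lemma IsMaxCut.isStablePartition [DecidableRel G.Adj] (hθ : 0 < θ) (hLR : IsMaxCut G L R)
    (hcut : (1 / 4 - θ ^ 2 * (2 / 3)) * n ^ 2 ≤ cutCount G L)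
    (hN : ∀ v, ∑ u ∈ G.neighborFinset v, (degIn G (G.neighborFinset v) u : ℝ)
      ≤ θ ^ 2 / 3 * n ^ 2) : IsStablePartition G θ L R := by
  have hR : R = Lᶜ := hLR.1
  have hid := sq_card_sub_half_add_sum_codegIn G L
  rw [← hR] at hid
  have hθn : 0 ≤ θ * n := by positivity
  have hsum₀ : 0 ≤ ∑ u ∈ L, (codegIn G R u : ℝ) := by positivity
  have hsum : ∑ u ∈ L, (codegIn G R u : ℝ) ≤ θ ^ 2 * (2 / 3) * n ^ 2 := by
    linarith [sq_nonneg (#L - n / 2 : ℝ)]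
  have hbal : |(#L - n / 2 : ℝ)| ≤ θ * n := abs_le_of_sq_le_sq (by nlinarith) hθn
  obtain ⟨hlow, hup⟩ := abs_le.1 hbal
  have hsum' : ∑ u ∈ R, (codegIn G L u : ℝ) = ∑ u ∈ L, (codegIn G R u : ℝ) :=
    mod_cast sum_codegIn_comm G R L
  have hdeg {A B : Finset (Fin n)} (hAB : IsMaxCut G A B) {v : Fin n} (hv : v ∈ A)
      (hA : ∑ u ∈ A, (codegIn G B u : ℝ) ≤ θ ^ 2 * (2 / 3) * n ^ 2) : degIn G A v ≤ θ * n := by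
    refine le_of_sq_le_sq ?_ hθn
    have hsq := hAB.sq_degIn_le hv
    rify at hsq
    linarith [hN v]
  refine ⟨hR, by linarith, ?_, hsum.trans (by nlinarith), fun v hv ↦ hdeg hLR hv hsum,
    fun v hv ↦ hdeg hLR.symm hv (hsum'.trans_le hsum)⟩
  rw [hR, cast_card_compl]
  linarith

lemma eventually_isStablePartition (hk : 2 ≤ k) (hθ : 0 < θ) :
    ∀ᶠ n : ℕ in atTop, ∀ G : SimpleGraph (Fin n), IsSpexWheel (2 * k + 1) G → ∀ L R,
      IsMaxCut G L R → IsStablePartition G θ L R := by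
  classical
  filter_upwards [eventually_sum_degIn_neighborFinset_le hk (by positivity : 0 < θ ^ 2 / 3),
    eventually_ge_atTop 2, eventually_gt_atTop ⌈3 / θ ^ 2⌉₊] with n hN hn hnθ G hG L R hLR
  replace hN := hN G hG.1
  refine hLR.isStablePartition hθ ?_ hN
  have hn' : (2 : ℝ) ≤ n := mod_cast hn
  have hlam := pow_le_pow_left₀ (by linarith) (hG.half_sub_one_le_lam1 hk (by omega)) 2
  have hsq := hLR.sq_lam1_le (by omega) hN
  replace hnθ := (div_lt_iff₀ (by positivity)).1 (Nat.lt_of_ceil_lt hnθ)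
  nlinarith

end Stability

section Rewiring

open Finset

variable {n t c : ℕ} {G : SimpleGraph (Fin n)} {s : Fin n} {L T W : Finset (Fin n)} {x : Fin n → ℝ}

/-- The graph obtained from `G` by replacing the neighbourhood of `s` by `T`. -/
def rewire (G : SimpleGraph (Fin n)) (s : Fin n) (T : Finset (Fin n)) : SimpleGraph (Fin n) where
  Adj u v := u ≠ v ∧ ((u = s ∧ v ∈ T) ∨ (v = s ∧ u ∈ T) ∨ (u ≠ s ∧ v ≠ s ∧ G.Adj u v))
  symm := ⟨fun u v h ↦ by rw [G.adj_comm]; tauto⟩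
  loopless := ⟨fun _ h ↦ h.1 rfl⟩

-- A wheel through `s` in the new graph is turned into a wheel of `G` by moving `s` to a vertex `s'`
-- off the wheel with enough neighbours.
lemma wheelFree_rewire (hG : WheelFree t G)
    (hT : ∀ W : Finset (Fin n), #W ≤ t → ∃ s' ∉ W, ∀ w ∈ W ∩ T, G.Adj s' w) :
    WheelFree t (rewire G s T) := by
  classical
  rintro ⟨f, hf⟩
  obtain ⟨s', hs', hadj⟩ := hT (univ.image f) (card_image_le.trans (by simp))
  have hne (a) : f a ≠ s' := fun h ↦ hs' (mem_image.2 ⟨a, mem_univ _, h⟩)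
  have hadj' (a) (ha : f a ∈ T) : G.Adj s' (f a) :=
    hadj _ (mem_inter.2 ⟨mem_image_of_mem f (mem_univ a), ha⟩)
  refine hG ⟨⟨fun a ↦ if f a = s then s' else f a, fun a b hab ↦ f.injective ?_⟩, fun a b hab ↦ ?_⟩
  · have := hne a
    have := hne b
    grind
  · obtain ⟨hfab, h⟩ := hf a b hab
    change G.Adj (if f a = s then s' else f a) (if f b = s then s' else f b)
    split_ifs with ha hb hb
    · exact absurd (ha.trans hb.symm) hfab
    · exact hadj' b (by tauto)
    · exact (hadj' a (by tauto)).symm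
    · tauto

lemma sum_mul_wdegIn_univ_eq (G : SimpleGraph (Fin n)) (s : Fin n) (x : Fin n → ℝ) :
    ∑ v, x v * wdegIn G univ x v
      = ∑ v ∈ {s}ᶜ, x v * wdegIn G {s}ᶜ x v + 2 * x s * wdegIn G univ x s := by
  have hself : wdegIn G {s} x s = 0 := by
    classical simp [wdegIn_eq_sum_ite]
  have hcomm : ∑ v ∈ {s}ᶜ, x v * wdegIn G {s} x v = x s * wdegIn G {s}ᶜ x s := by
    rw [sum_mul_wdegIn_comm, sum_singleton]
  rw [← sum_add_sum_compl {s}, sum_singleton]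
  simp only [← wdegIn_add_wdegIn_compl G {s} x, mul_add, sum_add_distrib, hcomm, hself]
  ring

lemma wdegIn_rewire_self (hs : s ∉ T) : wdegIn (rewire G s T) univ x s = ∑ u ∈ T, x u := by
  classical
  rw [wdegIn]
  refine sum_congr ?_ fun _ _ ↦ rfl
  ext u
  have : u ∈ T → u ≠ s := fun h₁ h₂ ↦ hs (h₂ ▸ h₁)
  simp only [rewire, mem_filter, mem_univ, true_and]
  tauto

lemma wdegIn_rewire_compl {v : Fin n} (hv : v ≠ s) :
    wdegIn (rewire G s T) {s}ᶜ x v = wdegIn G {s}ᶜ x v := by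
  classical
  simp only [wdegIn_eq_sum_ite]
  refine sum_congr rfl fun u hu ↦ ?_
  have hus : u ≠ s := by simpa using hu
  have : v ≠ u ∧ G.Adj v u ↔ G.Adj v u := and_iff_right_of_imp SimpleGraph.Adj.ne
  simp [rewire, hv, hus, this]

lemma sum_mul_wdegIn_rewire (hs : s ∉ T) :
    ∑ v, x v * wdegIn (rewire G s T) univ x v
      = ∑ v, x v * wdegIn G univ x v + 2 * x s * (∑ u ∈ T, x u - wdegIn G univ x s) := by
  have hcompl : ∑ v ∈ {s}ᶜ, x v * wdegIn (rewire G s T) {s}ᶜ x v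
      = ∑ v ∈ {s}ᶜ, x v * wdegIn G {s}ᶜ x v :=
    sum_congr rfl fun v hv ↦ by rw [wdegIn_rewire_compl (by simpa using hv)]
  rw [sum_mul_wdegIn_univ_eq (rewire G s T) s, sum_mul_wdegIn_univ_eq G s, wdegIn_rewire_self hs,
    hcompl]
  ring

lemma IsPerronVector.sum_mul_wdegIn (hx : IsPerronVector G x) :
    ∑ v, x v * wdegIn G univ x v = lam1 G * ∑ v, x v ^ 2 := by
  simp only [hx.wdegIn_univ, mul_sum]
  exact sum_congr rfl fun v _ ↦ by ring

lemma IsPerronVector.sum_le_wdegIn_of_rewire (hx : IsPerronVector G x) (hs : s ∉ T)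
    (hlam : lam1 (rewire G s T) ≤ lam1 G) : ∑ u ∈ T, x u ≤ wdegIn G univ x s := by
  by_contra! hlt
  have hmax : lam1 (rewire G s T) * ∑ v, x v ^ 2
      ≤ ∑ v, x v * wdegIn (rewire G s T) univ x v := by
    calc lam1 (rewire G s T) * ∑ v, x v ^ 2 ≤ lam1 G * ∑ v, x v ^ 2 := by
          gcongr
      _ ≤ lam1 G * ∑ v, x v ^ 2 + 2 * x s * (∑ u ∈ T, x u - wdegIn G univ x s) :=
          le_add_of_nonneg_right
            (mul_nonneg (mul_nonneg zero_le_two (hx.nonneg s)) (sub_pos.2 hlt).le)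
      _ = _ := by rw [sum_mul_wdegIn_rewire hs, hx.sum_mul_wdegIn]
  have heig := wdegIn_univ_eq_lam1_mul_of_le hmax s
  rw [wdegIn_rewire_self hs] at heig
  rw [heig, hx.wdegIn_univ] at hlt
  exact hlt.not_ge (mul_le_mul_of_nonneg_right hlam (hx.nonneg s))

lemma exists_notMem_forall_adj (hT : ∀ w ∈ T, codegIn G L w ≤ c) (hW : #W * (c + 1) < #L) :
    ∃ s' ∈ L, s' ∉ W ∧ ∀ w ∈ W ∩ T, G.Adj s' w := by
  classical
  set bad := W ∪ (W ∩ T).biUnion fun w ↦ {u ∈ L | ¬G.Adj w u}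
  have hbad : #bad < #L := by
    refine lt_of_le_of_lt ?_ hW
    calc #bad ≤ #W + #(W ∩ T) * c := by
          refine (card_union_le _ _).trans (Nat.add_le_add_left ?_ _)
          exact card_biUnion_le_card_mul _ _ _ fun w hw ↦ hT w (mem_inter.1 hw).2
      _ ≤ #W + #W * c := by gcongr; exact inter_subset_left
      _ = #W * (c + 1) := by ring
  obtain ⟨s', hs', hs'bad⟩ := exists_mem_notMem_of_card_lt_card hbad
  simp only [bad, mem_union, mem_biUnion, mem_filter, not_or, not_exists, not_and, not_not]
    at hs'bad
  exact ⟨s', hs', hs'bad.1, fun w hw ↦ (hs'bad.2 w hw hs').symm⟩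

end Rewiring

section Structure

open Finset Filter

variable {n k : ℕ} {G : SimpleGraph (Fin n)} {L R : Finset (Fin n)} {θ : ℝ} {x : Fin n → ℝ}

lemma IsPerronVector.wdegIn_le_degIn (hx : IsPerronVector G x) (A : Finset (Fin n)) (v : Fin n) :
    wdegIn G A x v ≤ degIn G A v := by
  rw [← wdegIn_one]
  exact wdegIn_mono fun u _ ↦ hx.le_one u

lemma IsPerronVector.sum_le_card (hx : IsPerronVector G x) (A : Finset (Fin n)) :
    ∑ u ∈ A, x u ≤ #A := by
  simpa using sum_le_card_nsmul A x 1 fun u _ ↦ hx.le_one u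

lemma IsPerronVector.sum_le_wdegIn_add_codegIn (hx : IsPerronVector G x) (A : Finset (Fin n))
    (v : Fin n) : ∑ u ∈ A, x u ≤ wdegIn G A x v + codegIn G A v := by
  classical
  rw [← sum_filter_add_sum_filter_not A (G.Adj v)]
  refine add_le_add_right ?_ _
  exact hx.sum_le_card _

lemma IsPerronVector.one_sub_le_of_codegIn_le {A : Finset (Fin n)} {v : Fin n}
    (hx : IsPerronVector G x) (hn : 0 < n) (hθ : 0 < θ) (hlam : lam1 G ≤ (1 / 2 + 2 * θ) * n)
    (hA : (1 / 2 - 5 * θ) * n ≤ ∑ u ∈ A, x u)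
    (hv : codegIn G A v ≤ 20 * θ * n) : 1 - 100 * θ ≤ x v := by
  have hn' : (0 : ℝ) < n := mod_cast hn
  have hlow : (1 / 2 - 25 * θ) * n ≤ (1 / 2 + 2 * θ) * x v * n :=
    calc (1 / 2 - 25 * θ) * n ≤ ∑ u ∈ A, x u - codegIn G A v := by linarith
      _ ≤ wdegIn G A x v := sub_le_iff_le_add.2 (hx.sum_le_wdegIn_add_codegIn A v)
      _ ≤ lam1 G * x v := by
          rw [← hx.wdegIn_univ, ← wdegIn_add_wdegIn_compl G A]
          exact le_add_of_nonneg_right (wdegIn_nonneg fun u _ ↦ hx.nonneg u)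
      _ ≤ (1 / 2 + 2 * θ) * n * x v := mul_le_mul_of_nonneg_right hlam (hx.nonneg v)
      _ = (1 / 2 + 2 * θ) * x v * n := by ring
  nlinarith [le_of_mul_le_mul_right hlow hn', hx.le_one v]

namespace IsStablePartition

lemma wdegIn_univ (h : IsStablePartition G θ L R) (x : Fin n → ℝ) (v : Fin n) :
    wdegIn G univ x v = wdegIn G L x v + wdegIn G R x v := by
  rw [h.eq_compl, wdegIn_add_wdegIn_compl]

lemma lam1_mul_le (h : IsStablePartition G θ L R) (hx : IsPerronVector G x) {v : Fin n}
    (hv : v ∈ L) : lam1 G * x v ≤ θ * n + ∑ u ∈ R, x u := by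
  rw [← hx.wdegIn_univ, h.wdegIn_univ]
  exact add_le_add ((hx.wdegIn_le_degIn L v).trans (h.degIn_left v hv))
    (wdegIn_le_sum fun u _ ↦ hx.nonneg u)

lemma le_sum_of_le_sum (h : IsStablePartition G θ L R) (hx : IsPerronVector G x) (hn : 0 < n)
    (hθ : 0 < θ) (hθ' : θ ≤ 1 / 100) (hlam : (1 / 2 - θ) * n ≤ lam1 G)
    (hR : (1 / 2 - 2 * θ) * n ≤ ∑ u ∈ R, x u) : (1 / 2 - 5 * θ) * n ≤ ∑ u ∈ L, x u := by
  have hn' : (0 : ℝ) < n := mod_cast hn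
  set S := ∑ u ∈ L, x u
  have hS : 0 ≤ S := sum_nonneg fun u _ ↦ hx.nonneg u
  have hmul : (1 / 2 - θ) * ((1 / 2 - 2 * θ) * n) * n ≤ (1 / 2 + θ) * (θ * n + S) * n :=
    calc (1 / 2 - θ) * ((1 / 2 - 2 * θ) * n) * n = (1 / 2 - θ) * n * ((1 / 2 - 2 * θ) * n) := by
          ring
      _ ≤ lam1 G * ∑ u ∈ R, x u := by
          refine mul_le_mul hlam hR (mul_nonneg ?_ hn'.le) (le_trans (mul_nonneg ?_ hn'.le) hlam)
          all_goals linarith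
      _ = ∑ u ∈ R, lam1 G * x u := mul_sum ..
      _ ≤ #R * (θ * n + S) := by
          rw [← nsmul_eq_mul]
          exact sum_le_card_nsmul R _ _ fun w hw ↦ h.symm.lam1_mul_le hx hw
      _ ≤ (1 / 2 + θ) * n * (θ * n + S) := by gcongr; exact h.card_right
      _ = (1 / 2 + θ) * (θ * n + S) * n := by ring
  have hle := le_of_mul_le_mul_right hmul hn'
  by_contra! hlt
  have : (1 / 2 + θ) * (θ * n + S) < (1 / 2 + θ) * (θ * n + (1 / 2 - 5 * θ) * n) := by gcongr
  nlinarith [mul_pos hθ hn', mul_pos (mul_pos hθ hθ) hn']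

lemma le_sum_and_lam1_le (h : IsStablePartition G θ L R) (hx : IsPerronVector G x) (hn : 0 < n)
    (hθ : 0 < θ) (hθ' : θ ≤ 1 / 100) (hlam : (1 / 2 - θ) * n ≤ lam1 G) :
    (1 / 2 - 5 * θ) * n ≤ ∑ u ∈ L, x u ∧ (1 / 2 - 5 * θ) * n ≤ ∑ u ∈ R, x u ∧
      lam1 G ≤ (1 / 2 + 2 * θ) * n := by
  obtain ⟨z, hz⟩ := hx.exists_eq_one
  wlog hzL : z ∈ L generalizing L R
  · have hzR : z ∈ R := by simpa [h.eq_compl] using hzL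
    obtain ⟨hR, hL, hle⟩ := this h.symm hzR
    exact ⟨hL, hR, hle⟩
  have hn' : (0 : ℝ) < n := mod_cast hn
  have hup : lam1 G ≤ θ * n + ∑ u ∈ R, x u := by simpa [hz] using h.lam1_mul_le hx hzL
  have hR : (1 / 2 - 2 * θ) * n ≤ ∑ u ∈ R, x u := by linarith
  have := hx.sum_le_card R
  have := h.card_right
  exact ⟨h.le_sum_of_le_sum hx hn hθ hθ' hlam hR, by nlinarith [hn'], by linarith⟩

lemma card_filter_lt_codegIn_le (h : IsStablePartition G θ L R) (hn : 0 < n) (hθ : 0 < θ) :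
    #{u ∈ R | 20 * θ * n < codegIn G L u} ≤ θ * n := by
  have hn' : (0 : ℝ) < n := mod_cast hn
  set B := {u ∈ R | 20 * θ * n < codegIn G L u}
  have hmarkov : #B * (20 * θ * n) ≤ θ ^ 2 * n ^ 2 :=
    calc #B * (20 * θ * n) ≤ ∑ u ∈ B, (codegIn G L u : ℝ) := by
          rw [← nsmul_eq_mul]
          exact card_nsmul_le_sum _ _ _ fun u hu ↦ (mem_filter.1 hu).2.le
      _ ≤ ∑ u ∈ R, (codegIn G L u : ℝ) := by gcongr; exact filter_subset _ _
      _ ≤ θ ^ 2 * n ^ 2 := h.symm.sum_codegIn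
  have hθn : 0 < θ * n := mul_pos hθ hn'
  have hle : 20 * (#B : ℝ) ≤ θ * n := le_of_mul_le_mul_right (by linarith) hθn
  linarith [(#B).cast_nonneg (α := ℝ)]

lemma codegIn_right_le (h : IsStablePartition G θ L R) (hG : IsSpexWheel (2 * k + 1) G)
    (hx : IsPerronVector G x) (hn : 0 < n) (hθ : 0 < θ)
    (hcard : (2 * k + 1 : ℝ) * (20 * θ * n + 1) < #L) (hR : (1 / 2 - 5 * θ) * n ≤ ∑ u ∈ R, x u)
    {s : Fin n} (hs : s ∈ L) : codegIn G R s ≤ 20 * θ * n := by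
  have hn' : (0 : ℝ) < n := mod_cast hn
  set T := {u ∈ R | ¬20 * θ * n < codegIn G L u}
  have hsT : s ∉ T := fun hsT ↦ by
    simpa [h.eq_compl, hs] using (mem_filter.1 hsT).1
  have hT (w) (hw : w ∈ T) : codegIn G L w ≤ ⌊20 * θ * n⌋₊ :=
    Nat.le_floor (not_lt.1 (mem_filter.1 hw).2)
  have hfree : WheelFree (2 * k + 1) (rewire G s T) := by
    refine wheelFree_rewire hG.1 fun W hW ↦ ?_
    obtain ⟨s', -, hs'⟩ := exists_notMem_forall_adj (W := W) hT (by
      have := Nat.floor_le (by positivity : 0 ≤ 20 * θ * n)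
      rw [← Nat.cast_lt (α := ℝ)]
      refine lt_of_le_of_lt ?_ hcard
      push_cast
      gcongr
      exact_mod_cast hW)
    exact ⟨s', hs'⟩
  have hsum := hx.sum_le_wdegIn_of_rewire hsT (hG.2 _ hfree)
  have hdeg : wdegIn G univ x s ≤ θ * n + (#R - codegIn G R s) := by
    rw [h.wdegIn_univ]
    refine add_le_add ((hx.wdegIn_le_degIn L s).trans (h.degIn_left s hs))
      ((hx.wdegIn_le_degIn R s).trans_eq (eq_sub_of_add_eq ?_))
    exact_mod_cast degIn_add_codegIn G R s
  have hRT : ∑ u ∈ R, x u ≤ θ * n + ∑ u ∈ T, x u := by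
    rw [← sum_filter_add_sum_filter_not R fun u ↦ 20 * θ * n < codegIn G L u]
    gcongr
    exact (hx.sum_le_card _).trans (h.card_filter_lt_codegIn_le hn hθ)
  nlinarith [h.card_right, mul_pos hθ hn']

end IsStablePartition

/-- A partition of the vertices into two parts of size at most `(1 / 2 + η) * n` such that every
vertex is adjacent to all but `η * n` of the vertices of the other part. -/
structure IsNearCompletePartition (G : SimpleGraph (Fin n)) (η : ℝ) (L R : Finset (Fin n)) :
    Prop where
  eq_compl : R = Lᶜ
  card_left : #L ≤ (1 / 2 + η) * n
  card_right : #R ≤ (1 / 2 + η) * n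
  codegIn_left : ∀ v ∈ L, codegIn G R v ≤ η * n
  codegIn_right : ∀ v ∈ R, codegIn G L v ≤ η * n

lemma IsStablePartition.isNearCompletePartition (h : IsStablePartition G θ L R)
    (hG : IsSpexWheel (2 * k + 1) G) (hn : 0 < n) (hθ : 0 < θ) (hθ' : θ ≤ 1 / 100)
    (hlam : (1 / 2 - θ) * n ≤ lam1 G) (hL : (2 * k + 1 : ℝ) * (20 * θ * n + 1) < #L)
    (hR : (2 * k + 1 : ℝ) * (20 * θ * n + 1) < #R) :
    IsNearCompletePartition G (100 * θ) L R ∧ lam1 G ≤ (1 / 2 + 100 * θ) * n ∧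
      ∀ x, IsPerronVector G x → ∀ v, 1 - 100 * θ ≤ x v := by
  have hθn : 0 < θ * n := mul_pos hθ (mod_cast hn)
  have hsum {x : Fin n → ℝ} (hx : IsPerronVector G x) := h.le_sum_and_lam1_le hx hn hθ hθ' hlam
  obtain ⟨y, hy⟩ := exists_isPerronVector hn G
  obtain ⟨hyL, hyR, hlam'⟩ := hsum hy
  have hcodegL (v) (hv : v ∈ L) := h.codegIn_right_le hG hy hn hθ hL hyR hv
  have hcodegR (v) (hv : v ∈ R) := h.symm.codegIn_right_le hG hy hn hθ hR hyL hv
  refine ⟨⟨h.eq_compl, by linarith only [h.card_left, hθn], by linarith only [h.card_right, hθn],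
    fun v hv ↦ by linarith only [hcodegL v hv, hθn],
    fun v hv ↦ by linarith only [hcodegR v hv, hθn]⟩, by linarith only [hlam', hθn],
    fun x hx v ↦ ?_⟩
  obtain ⟨hxL, hxR, -⟩ := hsum hx
  by_cases hv : v ∈ L
  · exact hx.one_sub_le_of_codegIn_le hn hθ hlam' hxR (hcodegL v hv)
  · have hvR : v ∈ R := by simpa [h.eq_compl] using hv
    exact hx.one_sub_le_of_codegIn_le hn hθ hlam' hxL (hcodegR v hvR)

lemma eventually_isNearCompletePartition (hk : 2 ≤ k) {η : ℝ} (hη : 0 < η)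
    (hηk : η ≤ 1 / (16 * k)) :
    ∀ᶠ n : ℕ in atTop, ∀ G : SimpleGraph (Fin n), IsSpexWheel (2 * k + 1) G → ∀ L R,
      IsMaxCut G L R → IsNearCompletePartition G η L R ∧ lam1 G ≤ (1 / 2 + η) * n ∧
        ∀ x, IsPerronVector G x → ∀ v, 1 - η ≤ x v := by
  obtain ⟨θ, rfl⟩ : ∃ θ, η = 100 * θ := ⟨η / 100, by ring⟩
  have hθ : 0 < θ := by linarith
  have hk' : (2 : ℝ) ≤ k := mod_cast hk
  have hθk : 100 * θ * k ≤ 1 / 16 := by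
    rw [le_div_iff₀ (by positivity)] at hηk
    linarith
  have hθ' : θ ≤ 1 / 100 := by nlinarith
  filter_upwards [eventually_isStablePartition hk hθ, eventually_gt_atTop ⌈1 / θ⌉₊,
    eventually_ge_atTop (16 * (2 * k + 1))] with n hstab hnθ hnk G hG L R hLR
  replace hnθ := (div_lt_iff₀ hθ).1 (Nat.lt_of_ceil_lt hnθ)
  have hnk' : 16 * (2 * k + 1 : ℝ) ≤ n := mod_cast hnk
  have hn : 0 < n := by omega
  have h := hstab G hG L R hLR
  have hlam : (1 / 2 - θ) * n ≤ lam1 G := by linarith [hG.half_sub_one_le_lam1 hk hn]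
  have hcard {A B : Finset (Fin n)} (hAB : IsStablePartition G θ A B) :
      (2 * k + 1 : ℝ) * (20 * θ * n + 1) < #A := by
    have hB := hAB.card_right
    rw [hAB.eq_compl, cast_card_compl] at hB
    nlinarith [hnk']
  exact h.isNearCompletePartition hG hn hθ hθ' hlam (hcard h) (hcard h.symm)

end Structure

section BlockGraphs

open Finset

variable {r d d₁ d₂ l l₁ l₂ : ℕ}

/-- There is a graph on `l` vertices with maximum degree at most `r`, with degree sum `r * l - d`,
and without components on more than `2 * r` vertices. The components are encoded by a colouring
which is constant along edges. -/
def HasBlockGraph (r d l : ℕ) : Prop :=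
  ∃ (V : Type) (_ : Fintype V) (H : SimpleGraph V) (_ : DecidableRel H.Adj) (c : V → ℕ),
    Fintype.card V = l ∧ (∀ v, #{u | H.Adj v u} ≤ r) ∧ ∑ v, #{u | H.Adj v u} + d = r * l ∧
      (∀ u v, H.Adj u v → c u = c v) ∧ ∀ i, #{v | c v = i} ≤ 2 * r

lemma hasBlockGraph_of_card_le {V : Type} [Fintype V] (H : SimpleGraph V) [DecidableRel H.Adj]
    (hV : Fintype.card V ≤ 2 * r) (hr : ∀ v, #{u | H.Adj v u} ≤ r)
    (hd : ∑ v, #{u | H.Adj v u} + d = r * Fintype.card V) :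
    HasBlockGraph r d (Fintype.card V) :=
  ⟨V, _, H, _, fun _ ↦ 0, rfl, hr, hd, fun _ _ _ ↦ rfl, fun _ ↦ (card_le_univ _).trans hV⟩

lemma hasBlockGraph_of_card_eq {V : Type} [Fintype V] (H : SimpleGraph V) [DecidableRel H.Adj]
    (hV : Fintype.card V ≤ 2 * r) (hr : ∀ v, #{u | H.Adj v u} = r) :
    HasBlockGraph r 0 (Fintype.card V) :=
  hasBlockGraph_of_card_le H hV (fun v ↦ (hr v).le) (by simp [hr, mul_comm])

lemma hasBlockGraph_zero (r : ℕ) : HasBlockGraph r 0 0 := by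
  simpa using hasBlockGraph_of_card_eq (r := r) (⊥ : SimpleGraph Empty)

lemma hasBlockGraph_add_one (hr : 1 ≤ r) : HasBlockGraph r 0 (r + 1) := by
  simpa using hasBlockGraph_of_card_eq (r := r) (⊤ : SimpleGraph (Fin (r + 1)))
    (by simp; omega) (by simp [filter_ne])

lemma hasBlockGraph_two_mul (r : ℕ) : HasBlockGraph r 0 (2 * r) := by
  classical
  have h := hasBlockGraph_of_card_eq (r := r) (completeBipartiteGraph (Fin r) (Fin r))
  simp only [card_filter, Fintype.sum_sum_type] at h
  simpa [two_mul] using h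

/-- The graph with vertices `none`, `(i, false)` and `(i, true)` for `i ≤ m`, in which
`(i, false)` and `(i, true)` as well as `none` and `(0, true)` are not adjacent, and all other pairs
of distinct vertices are. -/
def nearlyRegularGraph (m : ℕ) : SimpleGraph (Option (Fin (m + 1) × Bool)) where
  Adj
    | some x, some y => x.1 ≠ y.1
    | some x, none => x ≠ (0, true)
    | none, some y => y ≠ (0, true)
    | none, none => False
  symm := ⟨by rintro (_ | x) (_ | y) h <;> first | exact h | exact h.symm⟩
  loopless := ⟨by rintro (_ | x) h <;> simp at h⟩

instance (m : ℕ) : DecidableRel (nearlyRegularGraph m).Adj := by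
  rintro (_ | x) (_ | y) <;> unfold nearlyRegularGraph <;> infer_instance

lemma hasBlockGraph_add_two (hr : 2 ≤ r) (hodd : Odd r) : HasBlockGraph r 1 (r + 2) := by
  obtain ⟨m, rfl⟩ := hodd
  have hdeg (v) : #{u | (nearlyRegularGraph m).Adj v u} + (if v = some (0, true) then 1 else 0)
      = 2 * m + 1 := by
    rw [card_filter, Fintype.sum_option]
    rcases v with _ | v
    · have h : ∑ x, (if x = ((0 : Fin (m + 1)), true) then 0 else 1) = 2 * m + 1 := by
        simp [sum_ite, filter_ne']
        omega
      simpa [nearlyRegularGraph] using h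
    · have h : ∑ i, (if v.1 = i then 0 else 1) = m := by simp [sum_ite, filter_ne]
      simp only [nearlyRegularGraph, Fintype.sum_prod_type, Fintype.sum_bool, sum_add_distrib,
        ne_eq, ite_not, Option.some.injEq, h]
      split_ifs <;> omega
  have hcard : Fintype.card (Option (Fin (m + 1) × Bool)) = 2 * m + 1 + 2 := by
    simp; ring
  rw [← hcard]
  refine hasBlockGraph_of_card_le (nearlyRegularGraph m) (by omega) (fun v ↦ ?_) ?_
  · exact (Nat.le_add_right _ _).trans (hdeg v).le
  · have hsum := sum_congr (rfl : univ = univ) fun v _ ↦ hdeg v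
    rw [sum_add_distrib, Fintype.sum_ite_eq'] at hsum
    simpa [mul_comm] using hsum

lemma HasBlockGraph.add (h₁ : HasBlockGraph r d₁ l₁) (h₂ : HasBlockGraph r d₂ l₂) :
    HasBlockGraph r (d₁ + d₂) (l₁ + l₂) := by
  obtain ⟨V₁, _, H₁, _, c₁, hV₁, hr₁, hd₁, hc₁, hi₁⟩ := h₁
  obtain ⟨V₂, _, H₂, _, c₂, hV₂, hr₂, hd₂, hc₂, hi₂⟩ := h₂
  classical
  let e := Equiv.natSumNatEquivNat
  refine ⟨V₁ ⊕ V₂, inferInstance, H₁ ⊕g H₂, inferInstance, e ∘ Sum.map c₁ c₂, by simp [hV₁, hV₂],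
    ?_, ?_, ?_, fun i ↦ ?_⟩
  · rintro (v | v) <;> rw [card_filter, Fintype.sum_sum_type]
    · simpa using hr₁ v
    · simpa using hr₂ v
  · simp only [card_filter, Fintype.sum_sum_type]
    simp
    linarith
  · rintro (u | u) (v | v) h
    · simpa using hc₁ u v (by simpa using h)
    · simp at h
    · simp at h
    · simpa using hc₂ u v (by simpa using h)
  · rw [card_filter, Fintype.sum_sum_type]
    obtain ⟨i | i, rfl⟩ := e.surjective i
    · simpa using hi₁ i
    · simpa using hi₂ i

lemma HasBlockGraph.mul (h : HasBlockGraph r 0 l) (a : ℕ) : HasBlockGraph r 0 (a * l) := by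
  induction a with
  | zero => simpa using hasBlockGraph_zero r
  | succ a ih => simpa [add_mul] using ih.add h

-- Modulo `r + 1` the second summand is `-2 * b`, so `b` is found by halving `-l`.
lemma exists_eq_mul_add_mul (hl : 2 * (r + 1) * (r + 1) ≤ l) (hrl : Even (r * l)) :
    ∃ a b, l = a * (r + 1) + b * (2 * r) := by
  obtain ⟨q, s, hs, rfl⟩ : ∃ q s, s < r + 1 ∧ l = (r + 1) * q + s :=
    ⟨l / (r + 1), l % (r + 1), Nat.mod_lt _ r.succ_pos, (Nat.div_add_mod _ _).symm⟩
  have hq : 2 * (r + 1) ≤ q := by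
    by_contra! h
    nlinarith
  obtain ⟨b, j, hb, hbj⟩ : ∃ b j, b ≤ r + 1 ∧ s + 2 * b = j * (r + 1) := by
    by_cases hrs : Even (r + 1 - s)
    · obtain ⟨b, hb⟩ := hrs
      exact ⟨b, 1, by omega, by omega⟩
    · obtain ⟨b, hb⟩ : Even (2 * (r + 1) - s) := by
        rw [Nat.even_sub hs.le, Nat.even_add_one] at hrs
        rw [Nat.even_sub (by omega)]
        simp only [Nat.even_mul, Nat.even_add, Nat.even_add_one, even_two] at hrl ⊢
        tauto
      exact ⟨b, 2, by omega, by omega⟩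
  refine ⟨q + j - 2 * b, b, ?_⟩
  zify [show 2 * b ≤ q + j by omega] at hbj ⊢
  linear_combination hbj

lemma hasBlockGraph_of_even (hr : 2 ≤ r) (hl : 2 * (r + 1) * (r + 1) ≤ l) (hrl : Even (r * l)) :
    HasBlockGraph r 0 l := by
  obtain ⟨a, b, rfl⟩ := exists_eq_mul_add_mul hl hrl
  exact ((hasBlockGraph_add_one (by omega)).mul a).add ((hasBlockGraph_two_mul r).mul b)

lemma hasBlockGraph_mod_two (hr : 2 ≤ r) (hl : 2 * (r + 1) * (r + 1) + (r + 2) ≤ l) :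
    HasBlockGraph r (r * l % 2) l := by
  obtain h | h := (r * l).even_or_odd
  · simpa [Nat.even_iff.1 h] using hasBlockGraph_of_even hr (by omega) h
  · obtain ⟨hr', hl'⟩ := Nat.odd_mul.1 h
    have heven : Even (r * (l - (r + 2))) := by
      refine .mul_left ?_ _
      grind
    simpa [Nat.odd_iff.1 h, show l - (r + 2) + (r + 2) = l by omega] using
      (hasBlockGraph_of_even hr (by omega) heven).add (hasBlockGraph_add_two hr hr')

lemma exists_blockGraph {n : ℕ} {L : Finset (Fin n)} (hL : HasBlockGraph r d #L) :
    ∃ (H : SimpleGraph (Fin n)) (c : Fin n → ℕ), (∀ u v, H.Adj u v → u ∈ L ∧ v ∈ L ∧ c u = c v) ∧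
      (∀ v ∈ L, degIn H L v ≤ r) ∧ ∑ v ∈ L, degIn H L v + d = r * #L ∧
      ∀ i, #{v ∈ L | c v = i} ≤ 2 * r := by
  classical
  obtain ⟨V, _, H, _, c, hV, hr, hd, hc, hi⟩ := hL
  obtain ⟨f, rfl⟩ : ∃ f : V ↪ Fin n, univ.map f = L := by
    obtain ⟨e⟩ : Nonempty (V ≃ L) := Fintype.card_eq.1 (by simpa using hV)
    refine ⟨e.toEmbedding.trans (.subtype _), ?_⟩
    rw [← map_map, map_univ_equiv, univ_eq_attach, attach_map_val]
  have hdeg (v) : degIn (H.map f) (univ.map f) (f v) = #{u | H.Adj v u} := by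
    simp [degIn, filter_map]
  refine ⟨H.map f, Function.extend f c 0, ?_, ?_, ?_, fun i ↦ ?_⟩
  · rintro _ _ ⟨-, u, v, h, rfl, rfl⟩
    simp [f.injective.extend_apply, hc u v h]
  · simpa [hdeg] using hr
  · simpa [hdeg] using hd
  · simpa [filter_map, Function.comp_def, f.injective.extend_apply] using hi i

end BlockGraphs

section BlockJoins

open Finset

variable {n r d m : ℕ} {L : Finset (Fin n)} {a b : Fin n} {J : SimpleGraph (Fin n)}

/-- `J` is the join of a graph as in `HasBlockGraph r d #L` on `L` with the graph on `Lᶜ` whose only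
edge is `ab`. -/
structure IsBlockJoin (r d : ℕ) (L : Finset (Fin n)) (a b : Fin n) (J : SimpleGraph (Fin n)) :
    Prop where
  adj : ∀ u ∈ L, ∀ v ∉ L, J.Adj u v
  degIn_le : ∀ v ∈ L, degIn J L v ≤ r
  sum_degIn_add : ∑ v ∈ L, degIn J L v + d = r * #L
  adj_compl : ∀ u ∉ L, ∀ v ∉ L, J.Adj u v ↔ s(u, v) = s(a, b)
  exists_coloring : ∃ c : Fin n → ℕ, (∀ u ∈ L, ∀ v ∈ L, J.Adj u v → c u = c v) ∧
    ∀ i, #{v ∈ L | c v = i} ≤ 2 * r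

lemma exists_isBlockJoin (hL : HasBlockGraph r d #L) (hab : a ≠ b) (ha : a ∉ L) (hb : b ∉ L) :
    ∃ J, IsBlockJoin r d L a b J := by
  classical
  obtain ⟨H, c, hH, hdeg, hd, hc⟩ := exists_blockGraph hL
  let J := (⊤ : SimpleGraph (Fin n)).between L Lᶜ ⊔ H ⊔ SimpleGraph.edge a b
  have hJ (u v) (hu : u ∈ L) (hv : v ∈ L) : J.Adj u v ↔ H.Adj u v := by
    have hua : u ≠ a := ne_of_mem_of_not_mem hu ha
    have hub : u ≠ b := ne_of_mem_of_not_mem hu hb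
    simp [J, SimpleGraph.between_adj, SimpleGraph.edge_adj, hu, hv, hua, hub]
  have hdegIn (v) (hv : v ∈ L) : degIn J L v = degIn H L v := by
    unfold degIn
    congr 1
    ext u
    simp +contextual [hJ v u hv]
  refine ⟨J, fun u hu v hv ↦ ?_, fun v hv ↦ (hdegIn v hv).trans_le (hdeg v hv),
    by rwa [sum_congr rfl hdegIn], fun u hu v hv ↦ ?_, c,
    fun u hu v hv h ↦ (hH u v ((hJ u v hu hv).1 h)).2.2, hc⟩
  · simp [J, SimpleGraph.between_adj, hu, hv, ne_of_mem_of_not_mem hu hv]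
  · have hHuv : ¬ H.Adj u v := fun h ↦ hu (hH u v h).1
    simp [J, SimpleGraph.between_adj, SimpleGraph.edge_adj, hu, hv, hHuv]
    grind

lemma exists_ne_notMem_add_one_notMem {S : Finset (Fin (m + 1))} (hS : 2 * #S + 2 ≤ m + 1) :
    ∃ i j, i ≠ j ∧ i ∉ S ∧ i + 1 ∉ S ∧ j ∉ S ∧ j + 1 ∉ S := by
  have hcard : #{i ∈ Sᶜ | i + 1 ∈ S} ≤ #S :=
    card_le_card_of_injOn (· + 1) (by simp +contextual [Set.MapsTo])
      (add_left_injective 1).injOn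
  have hadd := card_filter_add_card_filter_not (s := Sᶜ) (fun i ↦ i + 1 ∈ S)
  rw [card_compl, Fintype.card_fin] at hadd
  obtain ⟨i, hi, j, hj, hij⟩ := one_lt_card.1 (show 1 < #{i ∈ Sᶜ | i + 1 ∉ S} by omega)
  simp only [mem_filter, mem_compl] at hi hj
  exact ⟨i, j, hij, hi.1, hi.2, hj.1, hj.2⟩

open Fin.NatCast in
lemma eq_add_one_of_forall_eq_add_one {α : Type*} {f : Fin (m + 1) → α} {i₀ : Fin (m + 1)}
    (hf : ∀ i, i ≠ i₀ → i + 1 ≠ i₀ → f i = f (i + 1)) {i : Fin (m + 1)} (hi : i ≠ i₀) :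
    f i = f (i₀ + 1) := by
  have hne (t : ℕ) (ht : t < m) : i₀ + ((t + 1 : ℕ) : Fin (m + 1)) ≠ i₀ := by
    rw [ne_eq, add_eq_left, Fin.natCast_eq_zero]
    exact Nat.not_dvd_of_pos_of_lt (by omega) (by omega)
  have hconst (t : ℕ) (ht : t < m) : f (i₀ + ((t + 1 : ℕ) : Fin (m + 1))) = f (i₀ + 1) := by
    induction t with
    | zero => simp
    | succ t ih =>
      rw [← ih (by omega), Nat.cast_succ (t + 1), ← add_assoc]
      refine (hf _ (hne t (by omega)) ?_).symm
      rw [add_assoc, ← Nat.cast_succ]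
      exact hne (t + 1) ht
  obtain ⟨t, ht⟩ : ∃ t, (i - i₀).val = t + 1 :=
    Nat.exists_eq_succ_of_ne_zero (by simpa [sub_eq_zero] using hi)
  have hi' : i₀ + ((t + 1 : ℕ) : Fin (m + 1)) = i := by simp [← ht]
  rw [← hi']
  exact hconst t (by have := (i - i₀).isLt; omega)

namespace IsBlockJoin

lemma eq_of_adj_compl (hJ : IsBlockJoin r d L a b J) {u v w : Fin n} (hu : u ∉ L) (hv : v ∉ L)
    (hw : w ∉ L) (huv : J.Adj u v) (huw : J.Adj u w) : v = w := by
  have h := ((hJ.adj_compl u hu v hv).1 huv).trans ((hJ.adj_compl u hu w hw).1 huw).symm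
  exact Sym2.congr_right.1 h

lemma degIn_compl_le_one (hJ : IsBlockJoin r d L a b J) {w : Fin n} (hw : w ∉ L) :
    degIn J Lᶜ w ≤ 1 := by
  classical
  unfold degIn
  rw [card_le_one]
  simp only [mem_filter, mem_compl]
  exact fun u hu v hv ↦ hJ.eq_of_adj_compl hw hu.1 hv.1 hu.2 hv.2

variable {h : Fin n} {g : Fin (2 * r + 1 + 1) → Fin n}

lemma hub_notMem (hJ : IsBlockJoin r d L a b J) (hr : 1 ≤ r) (hg : Function.Injective g)
    (hhub : ∀ i, J.Adj h (g i)) (hrim : ∀ i, J.Adj (g i) (g (i + 1))) : h ∉ L := by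
  classical
  intro hL
  set S : Finset (Fin (2 * r + 1 + 1)) := {i | g i ∈ L}
  have hS : #S ≤ r := by
    refine le_trans ?_ (hJ.degIn_le h hL)
    unfold degIn
    exact card_le_card_of_injOn g (by simp +contextual [S, Set.MapsTo, hhub]) hg.injOn
  obtain ⟨i, j, hij, hi, hi', hj, hj'⟩ := exists_ne_notMem_add_one_notMem (S := S) (by omega)
  simp only [S, mem_filter, mem_univ, true_and] at hi hi' hj hj'
  have hsym : s(g i, g (i + 1)) = s(g j, g (j + 1)) :=
    ((hJ.adj_compl _ hi _ hi').1 (hrim i)).trans ((hJ.adj_compl _ hj _ hj').1 (hrim j)).symm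
  obtain ⟨h₁, -⟩ | ⟨h₁, h₂⟩ := Sym2.eq_iff.1 hsym
  · exact hij (hg h₁)
  · have htwo : i + (1 + 1) = i := by rw [← add_assoc, hg h₂, hg h₁]
    have hval := congrArg Fin.val (add_eq_left.1 htwo)
    rw [Fin.val_add, Fin.val_one', Fin.val_zero, Nat.mod_eq_of_lt (a := 1) (by omega),
      Nat.mod_eq_of_lt (by omega)] at hval
    omega

lemma hub_mem (hJ : IsBlockJoin r d L a b J) (hg : Function.Injective g)
    (hhub : ∀ i, J.Adj h (g i)) (hrim : ∀ i, J.Adj (g i) (g (i + 1))) : h ∈ L := by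
  classical
  by_contra hL
  obtain ⟨c, hc, hcard⟩ := hJ.exists_coloring
  obtain ⟨i₀, hi₀⟩ : ∃ i₀, ∀ i ≠ i₀, g i ∈ L := by
    by_cases hex : ∃ i₀, g i₀ ∉ L
    · obtain ⟨i₀, hi₀⟩ := hex
      refine ⟨i₀, fun i hi ↦ by_contra fun hiL ↦ hi (hg ?_)⟩
      exact hJ.eq_of_adj_compl hL hiL hi₀ (hhub i) (hhub i₀)
    · push Not at hex
      exact ⟨0, fun i _ ↦ hex i⟩
  have hconst (i) (hi : i ≠ i₀) : c (g i) = c (g (i₀ + 1)) :=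
    eq_add_one_of_forall_eq_add_one (f := c ∘ g)
      (fun i hi hi' ↦ hc _ (hi₀ i hi) _ (hi₀ _ hi') (hrim i)) hi
  have hle : #{i₀}ᶜ ≤ #{v ∈ L | c v = c (g (i₀ + 1))} :=
    card_le_card_of_injOn g (by simp +contextual [Set.MapsTo, hi₀, hconst]) hg.injOn
  rw [card_compl, Fintype.card_fin, card_singleton] at hle
  have := hcard (c (g (i₀ + 1)))
  omega

lemma wheelFree (hJ : IsBlockJoin r d L a b J) (hr : 1 ≤ r) : WheelFree (2 * r + 3) J := by
  intro hwheel
  obtain ⟨h, g, hg, hhub, hrim⟩ :=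
    (containsCopy_wheelGraph_iff (m := 2 * r + 1) (by omega)).1 hwheel
  exact hJ.hub_notMem hr hg hhub hrim (hJ.hub_mem hg hhub hrim)

end IsBlockJoin

end BlockJoins

section Comparison

open Finset

variable {n r d D : ℕ} {G J : SimpleGraph (Fin n)} {L : Finset (Fin n)} {a b : Fin n}
  {x y : Fin n → ℝ} {η : ℝ}

namespace IsBlockJoin

lemma two_mul_card_mul_card_compl_le (hJ : IsBlockJoin r d L a b J) :
    2 * ((#L : ℝ) * #Lᶜ) ≤ lam1 J * n := by
  classical
  have hcut : cutCount J L = #L * #Lᶜ := by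
    rw [cutCount_eq_sum_degIn, ← smul_eq_mul, ← sum_const]
    refine sum_congr rfl fun u hu ↦ ?_
    unfold degIn
    rw [filter_true_of_mem fun v hv ↦ hJ.adj u hu v (mem_compl.1 hv)]
  simpa [hcut] using two_mul_cutCount_le_lam1_mul J L

lemma wdegIn_univ_of_mem (hJ : IsBlockJoin r d L a b J) {v : Fin n} (hv : v ∈ L) :
    wdegIn J univ y v = wdegIn J L y v + ∑ u ∈ Lᶜ, y u := by
  rw [← wdegIn_add_wdegIn_compl J L, wdegIn_eq_sum fun u hu ↦ hJ.adj v hv u (mem_compl.1 hu)]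

lemma wdegIn_univ_of_notMem (hJ : IsBlockJoin r d L a b J) {v : Fin n} (hv : v ∉ L) :
    wdegIn J univ y v = ∑ u ∈ L, y u + wdegIn J Lᶜ y v := by
  rw [← wdegIn_add_wdegIn_compl J L, wdegIn_eq_sum fun u hu ↦ (hJ.adj u hu v hv).symm]

lemma sub_mul_le_sum_compl (hJ : IsBlockJoin r d L a b J) (hr : r ≤ lam1 J) (hy₀ : ∀ v, 0 ≤ y v)
    (hy : ∀ v, wdegIn J univ y v = lam1 J * y v) {v : Fin n} (hv : v ∈ L) :
    (lam1 J - r) * y v ≤ ∑ u ∈ Lᶜ, y u := by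
  obtain ⟨u, hu, hmax⟩ := exists_max_image L y ⟨v, hv⟩
  have hdeg : wdegIn J L y u ≤ r * y u := (wdegIn_le_degIn_mul hmax).trans
    (mul_le_mul_of_nonneg_right (mod_cast hJ.degIn_le u hu) (hy₀ u))
  have hu' := hy u
  rw [hJ.wdegIn_univ_of_mem hu] at hu'
  have hvu := mul_le_mul_of_nonneg_left (hmax v hv) (sub_nonneg.2 hr)
  linarith

lemma exists_eigenvector (hJ : IsBlockJoin r d L a b J) (hn : 0 < n) (hr : r < lam1 J) :
    ∃ y : Fin n → ℝ, (∀ v, 0 ≤ y v) ∧ (∀ v, wdegIn J univ y v = lam1 J * y v) ∧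
      ∑ u ∈ Lᶜ, y u = lam1 J - r ∧ ∀ v ∈ L, y v ≤ 1 := by
  obtain ⟨x, hx⟩ := exists_isPerronVector hn J
  have hL {v : Fin n} := hJ.sub_mul_le_sum_compl hr.le hx.nonneg hx.wdegIn_univ (v := v)
  have hr' : 0 < lam1 J - r := sub_pos.2 hr
  have hpos : 0 < ∑ u ∈ Lᶜ, x u := by
    obtain ⟨z, hz⟩ := hx.exists_eq_one
    by_cases hzL : z ∈ L
    · exact hr'.trans_le (by simpa [hz] using hL hzL)
    · exact sum_pos' (fun u _ ↦ hx.nonneg u) ⟨z, mem_compl.2 hzL, by simp [hz]⟩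
  refine ⟨fun v ↦ (lam1 J - r) / (∑ u ∈ Lᶜ, x u) * x v, fun v ↦ ?_, fun v ↦ ?_, ?_, fun v hv ↦ ?_⟩
  · exact mul_nonneg (by positivity) (hx.nonneg v)
  · rw [wdegIn_const_mul, hx.wdegIn_univ]
    ring
  · rw [← mul_sum, div_mul_cancel₀ _ hpos.ne']
  · exact (div_mul_eq_mul_div ..).trans_le (div_le_one_of_le₀ (hL hv) hpos.le)

lemma sub_mul_sum_one_sub_le (hJ : IsBlockJoin r d L a b J)
    (hy : ∀ v, wdegIn J univ y v = lam1 J * y v) (hsum : ∑ u ∈ Lᶜ, y u = lam1 J - r)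
    (hy₁ : ∀ v ∈ L, y v ≤ 1) : (lam1 J - r) * ∑ v ∈ L, (1 - y v) ≤ d := by
  have hcomm : ∑ v ∈ L, wdegIn J L y v = ∑ v ∈ L, (degIn J L v : ℝ) * y v := by
    simpa [wdegIn_one, mul_comm] using sum_mul_wdegIn_comm J L L y fun _ ↦ 1
  have heig : lam1 J * ∑ v ∈ L, y v
      = ∑ v ∈ L, (degIn J L v : ℝ) * y v + #L * (lam1 J - r) := by
    rw [mul_sum, sum_congr rfl fun v hv ↦ (hy v).symm.trans (hJ.wdegIn_univ_of_mem hv),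
      sum_add_distrib, hcomm, hsum, sum_const, nsmul_eq_mul]
  have hd : ∑ v ∈ L, ((r : ℝ) - degIn J L v) = d := by
    rw [sum_sub_distrib, sum_const, nsmul_eq_mul, mul_comm, sub_eq_iff_eq_add']
    exact_mod_cast hJ.sum_degIn_add.symm
  calc
    (lam1 J - r) * ∑ v ∈ L, (1 - y v) = ∑ v ∈ L, ((r : ℝ) - degIn J L v) * y v := by
      simp only [sub_mul, sum_sub_distrib, ← mul_sum, sum_const, nsmul_eq_mul, mul_one] at heig ⊢
      linarith
    _ ≤ ∑ v ∈ L, ((r : ℝ) - degIn J L v) :=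
      sum_le_sum fun v hv ↦ mul_le_of_le_one_right
        (sub_nonneg.2 (mod_cast hJ.degIn_le v hv)) (hy₁ v hv)
    _ = d := hd

lemma sub_one_mul_le_sum (hJ : IsBlockJoin r d L a b J) (hlam : 1 ≤ lam1 J) (hy₀ : ∀ v, 0 ≤ y v)
    (hy : ∀ v, wdegIn J univ y v = lam1 J * y v) {v : Fin n} (hv : v ∉ L) :
    (lam1 J - 1) * y v ≤ ∑ u ∈ L, y u := by
  obtain ⟨w, hw, hmax⟩ := exists_max_image Lᶜ y ⟨v, mem_compl.2 hv⟩
  rw [mem_compl] at hw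
  have hdeg : wdegIn J Lᶜ y w ≤ 1 * y w := (wdegIn_le_degIn_mul hmax).trans
    (mul_le_mul_of_nonneg_right (mod_cast hJ.degIn_compl_le_one hw) (hy₀ w))
  have hw' := hy w
  rw [hJ.wdegIn_univ_of_notMem hw] at hw'
  have hvw := mul_le_mul_of_nonneg_left (hmax v (mem_compl.2 hv)) (sub_nonneg.2 hlam)
  linarith

lemma exists_eigenvector_le (hJ : IsBlockJoin r d L a b J) (hn : 0 < n) (hd : d ≤ 1)
    (hlam : 11 * ((r : ℝ) + 1) ≤ lam1 J) (hL : #L ≤ 2 * (lam1 J - 1))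
    (hlamL : lam1 J ≤ 2 * (#L : ℝ) - 1) :
    ∃ y : Fin n → ℝ, (∀ v, 0 ≤ y v) ∧ (∀ v, wdegIn J univ y v = lam1 J * y v) ∧
      (∀ v ∈ L, y v ≤ 1) ∧ r * ∑ v ∈ L, (1 - y v) ≤ 1 / 10 ∧ ∀ v ∉ L, 1 / 2 ≤ y v ∧ y v ≤ 2 := by
  have hr : (0 : ℝ) ≤ r := r.cast_nonneg
  obtain ⟨y, hy₀, hy, hsum, hy₁⟩ := hJ.exists_eigenvector hn (by linarith)
  set T := ∑ v ∈ L, (1 - y v) with hTdef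
  have hT₀ : 0 ≤ T := sum_nonneg fun v hv ↦ sub_nonneg.2 (hy₁ v hv)
  have hT : (lam1 J - r) * T ≤ 1 :=
    (hJ.sub_mul_sum_one_sub_le hy hsum hy₁).trans (mod_cast hd)
  have hrT : 10 * (r * T) + 10 * T ≤ 1 := by nlinarith
  have hrT₀ : 0 ≤ r * T := mul_nonneg hr hT₀
  have hsumL : ∑ v ∈ L, y v = #L - T := by simp [hTdef, sum_sub_distrib]
  refine ⟨y, hy₀, hy, hy₁, by linarith, fun v hv ↦ ⟨?_, ?_⟩⟩
  · have hv' := (hy v).symm.trans (hJ.wdegIn_univ_of_notMem hv)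
    have := wdegIn_nonneg (G := J) (v := v) fun u (_ : u ∈ Lᶜ) ↦ hy₀ u
    refine le_of_mul_le_mul_left (a := lam1 J) ?_ (by linarith)
    linarith
  · have hv' := hJ.sub_one_mul_le_sum (by linarith) hy₀ hy hv
    refine le_of_mul_le_mul_left (a := lam1 J - 1) ?_ (by linarith)
    linarith

end IsBlockJoin

lemma sum_mul_wdegIn_le_of_lam1_le (hlam : lam1 J ≤ lam1 G) (hx₀ : ∀ v, 0 ≤ x v)
    (hy₀ : ∀ v, 0 ≤ y v) (hx : ∀ v, wdegIn G univ x v = lam1 G * x v)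
    (hy : ∀ v, wdegIn J univ y v = lam1 J * y v) :
    ∑ v, y v * wdegIn J univ x v ≤ ∑ v, y v * wdegIn G univ x v := by
  rw [sum_mul_wdegIn_comm]
  refine sum_le_sum fun v _ ↦ ?_
  rw [hy, hx, mul_left_comm, mul_left_comm (y v), mul_comm (y v)]
  exact mul_le_mul_of_nonneg_right hlam (mul_nonneg (hx₀ v) (hy₀ v))

namespace IsBlockJoin

lemma one_sub_mul_sub_le_sum_wdegIn_sub (hJ : IsBlockJoin r d L a b J) (hx : IsPerronVector G x)
    (hxη : ∀ v, 1 - η ≤ x v) (hdeg : ∀ v ∈ L, degIn G L v ≤ r)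
    (hD : ∑ v ∈ L, degIn G L v + D = r * #L) :
    (1 - η) * D - d ≤ ∑ v ∈ L, (wdegIn J L x v - wdegIn G L x v) := by
  have hcomm (H : SimpleGraph (Fin n)) :
      ∑ v ∈ L, wdegIn H L x v = ∑ v ∈ L, x v * degIn H L v := by
    simpa [wdegIn_one] using sum_mul_wdegIn_comm H L L x fun _ ↦ 1
  have hdef {H : SimpleGraph (Fin n)} {e : ℕ} (he : ∑ v ∈ L, degIn H L v + e = r * #L) :
      (e : ℝ) = ∑ v ∈ L, ((r : ℝ) - degIn H L v) := by
    rw [sum_sub_distrib, sum_const, nsmul_eq_mul, mul_comm, eq_sub_iff_add_eq']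
    exact_mod_cast he
  rw [sum_sub_distrib, hcomm, hcomm, hdef hD, hdef hJ.sum_degIn_add, mul_sum, ← sum_sub_distrib,
    ← sum_sub_distrib]
  refine sum_le_sum fun v hv ↦ ?_
  have hG : (0 : ℝ) ≤ r - degIn G L v := sub_nonneg.2 (mod_cast hdeg v hv)
  have hJ' : (0 : ℝ) ≤ r - degIn J L v := sub_nonneg.2 (mod_cast hJ.degIn_le v hv)
  have hGx := mul_le_mul_of_nonneg_right (hxη v) hG
  have hJx := mul_le_mul_of_nonneg_right (hx.le_one v) hJ'
  linarith

lemma exists_one_sub_mul_add_le (hJ : IsBlockJoin r d L a b J) (hn : 0 < n) (hd : d ≤ 1)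
    (hlam : 11 * ((r : ℝ) + 1) ≤ lam1 J) (hL : #L ≤ 2 * (lam1 J - 1))
    (hlamL : lam1 J ≤ 2 * (#L : ℝ) - 1) (hJG : lam1 J ≤ lam1 G) (hx : IsPerronVector G x)
    (hxη : ∀ v, 1 - η ≤ x v) (hdeg : ∀ v ∈ L, degIn G L v ≤ r)
    (hD : ∑ v ∈ L, degIn G L v + D = r * #L) :
    ∃ y : Fin n → ℝ, (∀ v ∉ L, 1 / 2 ≤ y v ∧ y v ≤ 2) ∧
      (1 - η) * D + ∑ v ∈ Lᶜ, y v * (wdegIn J Lᶜ x v - wdegIn G Lᶜ x v) ≤ d + 1 / 10 := by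
  obtain ⟨y, hy₀, hy, hy₁, hT, hyL⟩ := hJ.exists_eigenvector_le hn hd hlam hL hlamL
  refine ⟨y, hyL, ?_⟩
  have hcompare := sum_mul_wdegIn_le_of_lam1_le hJG hx.nonneg hy₀ hx.wdegIn_univ hy
  rw [← sub_nonpos, ← sum_sub_distrib, ← sum_add_sum_compl L] at hcompare
  simp only [← mul_sub] at hcompare
  have hmem : ∑ v ∈ L, y v * (wdegIn J L x v - wdegIn G L x v)
      ≤ ∑ v ∈ L, y v * (wdegIn J univ x v - wdegIn G univ x v) := by
    refine sum_le_sum fun v hv ↦ mul_le_mul_of_nonneg_left ?_ (hy₀ v)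
    rw [hJ.wdegIn_univ_of_mem hv, ← wdegIn_add_wdegIn_compl G L]
    linarith [wdegIn_le_sum (G := G) (v := v) fun u (_ : u ∈ Lᶜ) ↦ hx.nonneg u]
  have hnotMem : ∑ v ∈ Lᶜ, y v * (wdegIn J Lᶜ x v - wdegIn G Lᶜ x v)
      ≤ ∑ v ∈ Lᶜ, y v * (wdegIn J univ x v - wdegIn G univ x v) := by
    refine sum_le_sum fun v hv ↦ mul_le_mul_of_nonneg_left ?_ (hy₀ v)
    rw [hJ.wdegIn_univ_of_notMem (mem_compl.1 hv), ← wdegIn_add_wdegIn_compl G L]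
    linarith [wdegIn_le_sum (G := G) (v := v) fun u (_ : u ∈ L) ↦ hx.nonneg u]
  have herr : ∑ v ∈ L, (1 - y v) * (wdegIn J L x v - wdegIn G L x v) ≤ 1 / 10 := by
    refine le_trans ?_ hT
    rw [mul_comm, sum_mul]
    refine sum_le_sum fun v hv ↦ mul_le_mul_of_nonneg_left ?_ (sub_nonneg.2 (hy₁ v hv))
    refine (sub_le_self _ (wdegIn_nonneg fun u _ ↦ hx.nonneg u)).trans ?_
    exact (wdegIn_le_degIn_mul fun u _ ↦ hx.le_one u).trans
      (by simpa using hJ.degIn_le v hv)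
  have hmain := hJ.one_sub_mul_sub_le_sum_wdegIn_sub hx hxη hdeg hD
  simp only [sub_mul, one_mul, sum_sub_distrib] at herr hmain hmem hnotMem hcompare ⊢
  linarith

end IsBlockJoin

end Comparison

section CommonNeighbours

open Finset

variable {n k r m : ℕ} {G : SimpleGraph (Fin n)} {L R S T : Finset (Fin n)} {v w : Fin n}

/-- The common neighbours in `R` of the vertices of `S`. -/
noncomputable def commonNbrs (G : SimpleGraph (Fin n)) (R S : Finset (Fin n)) :
    Finset (Fin n) := by
  classical
  exact {w ∈ R | ∀ s ∈ S, G.Adj s w}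

lemma mem_commonNbrs : w ∈ commonNbrs G R S ↔ w ∈ R ∧ ∀ s ∈ S, G.Adj s w := by
  classical exact mem_filter

lemma commonNbrs_subset : commonNbrs G R S ⊆ R := fun _ hw ↦ (mem_commonNbrs.1 hw).1

lemma card_le_card_commonNbrs_add (hS : ∀ s ∈ S, codegIn G R s ≤ m) :
    #R ≤ #(commonNbrs G R S) + #S * m := by
  classical
  have hsub : R ⊆ commonNbrs G R S ∪ S.biUnion fun s ↦ {w ∈ R | ¬ G.Adj s w} := by
    intro w hw
    simp only [mem_union, mem_commonNbrs, mem_biUnion, mem_filter]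
    grind
  calc #R ≤ #(commonNbrs G R S) + #(S.biUnion fun s ↦ {w ∈ R | ¬ G.Adj s w}) :=
        (card_le_card hsub).trans (card_union_le _ _)
    _ ≤ #(commonNbrs G R S) + #S * m := by
        gcongr
        refine card_biUnion_le_card_mul _ _ _ fun s hs ↦ le_trans (le_of_eq ?_) (hS s hs)
        unfold codegIn
        congr!

lemma WheelFree.degIn_le (hk : 2 ≤ k) (hG : WheelFree (2 * k + 1) G)
    (hL : ∀ s ∈ L, codegIn G R s ≤ m) (hR : (k + 1) * m + k ≤ #R) (hv : v ∈ L) :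
    degIn G L v ≤ k - 1 := by
  classical
  by_contra! hdeg
  rw [degIn_eq_card_inter] at hdeg
  obtain ⟨A, hA, hAk⟩ := exists_subset_card_eq (s := L ∩ G.neighborFinset v) (n := k) (by omega)
  simp only [subset_iff, mem_inter, SimpleGraph.mem_neighborFinset] at hA
  have hcommon := card_le_card_commonNbrs_add (S := insert v A) (m := m)
    (forall_mem_insert .. |>.2 ⟨hL v hv, fun s hs ↦ hL s (hA hs).1⟩)
  have hmul : #(insert v A) * m ≤ (k + 1) * m :=
    Nat.mul_le_mul_right _ ((card_insert_le v A).trans_eq (by rw [hAk]))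
  refine hG (containsCopy_wheelGraph_of_complete_bipartite (h := v) (A := A)
    (B := commonNbrs G R (insert v A)) hk (fun a ha ↦ (hA ha).2) (fun w hw ↦ ?_)
    (fun a ha w hw ↦ ?_) hAk.ge (by omega))
  · exact (mem_commonNbrs.1 hw).2 v (mem_insert_self v A)
  · exact (mem_commonNbrs.1 hw).2 a (mem_insert_of_mem ha)

/-- The vertices of `R` joined to `v` and to every neighbour of `v` in `L`. -/
noncomputable def starNbrs (G : SimpleGraph (Fin n)) (L R : Finset (Fin n)) (v : Fin n) :
    Finset (Fin n) := by
  classical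
  exact commonNbrs G R (insert v (L ∩ G.neighborFinset v))

lemma mem_starNbrs :
    w ∈ starNbrs G L R v ↔ w ∈ R ∧ G.Adj v w ∧ ∀ u ∈ L, G.Adj v u → G.Adj u w := by
  simp [starNbrs, mem_commonNbrs]

lemma starNbrs_subset : starNbrs G L R v ⊆ R := by
  classical exact commonNbrs_subset

lemma card_le_card_starNbrs_add (hL : ∀ s ∈ L, codegIn G R s ≤ m) (hv : v ∈ L)
    (hdeg : degIn G L v ≤ r) : #R ≤ #(starNbrs G L R v) + (r + 1) * m := by
  classical
  refine (card_le_card_commonNbrs_add (S := insert v (L ∩ G.neighborFinset v)) (m := m)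
    (forall_mem_insert .. |>.2 ⟨hL v hv, fun s hs ↦ hL s (mem_inter.1 hs).1⟩)).trans ?_
  unfold starNbrs
  gcongr
  refine (card_insert_le _ _).trans ?_
  rw [← degIn_eq_card_inter]
  gcongr

lemma card_filter_notMem_starNbrs_le (hR : ∀ w ∈ R, codegIn G L w ≤ m)
    (hL : ∀ u ∈ L, degIn G L u ≤ r) (hw : w ∈ R) :
    #{v ∈ L | w ∉ starNbrs G L R v} ≤ (r + 1) * m := by
  classical
  set C : Finset (Fin n) := {u ∈ L | ¬ G.Adj w u} with hC
  have hCm : #C ≤ m := by simpa [codegIn, hC] using hR w hw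
  have hsub : {v ∈ L | w ∉ starNbrs G L R v} ⊆ C ∪ C.biUnion fun u ↦ L ∩ G.neighborFinset u := by
    intro v hv
    simp only [mem_filter, mem_starNbrs, hC, mem_union, mem_biUnion, mem_inter,
      SimpleGraph.mem_neighborFinset, G.adj_comm w] at hv ⊢
    grind [G.adj_comm]
  have hbi : #(C.biUnion fun u ↦ L ∩ G.neighborFinset u) ≤ #C * r :=
    card_biUnion_le_card_mul _ _ _ fun u hu ↦
      degIn_eq_card_inter.symm.trans_le (hL u (mem_filter.1 hu).1)
  calc #{v ∈ L | w ∉ starNbrs G L R v} ≤ #C + #C * r :=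
        (card_le_card hsub).trans ((card_union_le _ _).trans (by gcongr))
    _ = (r + 1) * #C := by ring
    _ ≤ (r + 1) * m := by gcongr

end CommonNeighbours

section OneEdge

open Finset

variable {n k r m D : ℕ} {G : SimpleGraph (Fin n)} {L R T : Finset (Fin n)} {a b v : Fin n}

/-- `G` has at most one edge with both ends in `T`. -/
def HasAtMostOneEdgeIn (G : SimpleGraph (Fin n)) (T : Finset (Fin n)) : Prop :=
  ∀ a ∈ T, ∀ b ∈ T, ∀ c ∈ T, ∀ d ∈ T, G.Adj a b → G.Adj c d → s(a, b) = s(c, d)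

lemma WheelFree.hasAtMostOneEdgeIn_starNbrs (hk : 3 ≤ k) (hG : WheelFree (2 * k + 1) G)
    (hdeg : degIn G L v = k - 1) (hT : k + 1 ≤ #(starNbrs G L R v)) :
    HasAtMostOneEdgeIn G (starNbrs G L R v) := by
  classical
  intro a ha b hb c hc d hd hab hcd
  have hA : k - 1 ≤ #(L ∩ G.neighborFinset v) := by rw [← degIn_eq_card_inter, hdeg]
  have hvA (u) (hu : u ∈ L ∩ G.neighborFinset v) : G.Adj v u := by simpa using (mem_inter.1 hu).2
  have hvT (w) (hw : w ∈ starNbrs G L R v) : G.Adj v w := (mem_starNbrs.1 hw).2.1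
  have hAT (u) (hu : u ∈ L ∩ G.neighborFinset v) (w) (hw : w ∈ starNbrs G L R v) : G.Adj u w :=
    (mem_starNbrs.1 hw).2.2 u (mem_inter.1 hu).1 (hvA u hu)
  have hpath {a b c : Fin n} (ha : a ∈ starNbrs G L R v) (hb : b ∈ starNbrs G L R v)
      (hc : c ∈ starNbrs G L R v) (hab : G.Adj a b) (hbc : G.Adj b c) : a = c :=
    by_contra fun hac ↦ hG <| containsCopy_wheelGraph_of_path (by omega) hvA hvT hAT hA hT
      ha hb hc hab hbc hac
  by_contra hne
  refine hG (containsCopy_wheelGraph_of_two_edges hk hvA hvT hAT hA hT ha hb hc hd hab hcd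
    ?_ ?_ ?_ ?_) <;> rintro rfl
  · exact hne (by rw [hpath hb ha hd hab.symm hcd])
  · exact hne (by rw [hpath hb ha hc hab.symm hcd.symm, Sym2.eq_swap])
  · exact hne (by rw [hpath ha hb hd hab hcd, Sym2.eq_swap])
  · exact hne (by rw [hpath ha hb hc hab hcd.symm])

lemma HasAtMostOneEdgeIn.sum_degIn_le_two (hT : HasAtMostOneEdgeIn G T) :
    ∑ v ∈ T, degIn G T v ≤ 2 := by
  classical
  have hsum : ∑ v ∈ T, degIn G T v = #(T.sigma fun v ↦ {u ∈ T | G.Adj v u}) := by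
    rw [card_sigma]
    unfold degIn
    congr!
  rw [hsum]
  obtain hempty | ⟨⟨a, b⟩, hab⟩ := (T.sigma fun v ↦ {u ∈ T | G.Adj v u}).eq_empty_or_nonempty
  · simp [hempty]
  · simp only [mem_sigma, mem_filter] at hab
    refine (card_le_card (t := {⟨a, b⟩, ⟨b, a⟩}) ?_).trans card_le_two
    rintro ⟨c, d⟩ hcd
    simp only [mem_sigma, mem_filter] at hcd
    obtain ⟨rfl, rfl⟩ | ⟨rfl, rfl⟩ :=
      Sym2.eq_iff.1 (hT c hcd.1 d hcd.2.1 a hab.1 b hab.2.1 hcd.2.2 hab.2.2) <;> simp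

lemma HasAtMostOneEdgeIn.sum_degIn_le (hT : HasAtMostOneEdgeIn G T) (hTR : T ⊆ R)
    (hR : ∀ v ∈ R, degIn G R v ≤ r) : ∑ v ∈ R, degIn G R v ≤ 2 * (#(R \ T) * r) + 2 := by
  classical
  have hsdiff : ∑ v ∈ R \ T, degIn G R v ≤ #(R \ T) * r :=
    sum_le_card_nsmul _ _ _ fun v hv ↦ hR v (mem_sdiff.1 hv).1
  have hmixed : ∑ v ∈ T, degIn G (R \ T) v ≤ #(R \ T) * r := by
    rw [sum_degIn_comm]
    exact (sum_le_sum fun v _ ↦ degIn_mono hTR).trans hsdiff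
  have hsplit : ∑ v ∈ T, degIn G R v = ∑ v ∈ T, degIn G (R \ T) v + ∑ v ∈ T, degIn G T v := by
    rw [← sum_add_distrib]
    exact sum_congr rfl fun v _ ↦ by rw [← degIn_union sdiff_disjoint, sdiff_union_of_subset hTR]
  rw [← sum_sdiff hTR]
  linarith [hT.sum_degIn_le_two]

lemma card_filter_degIn_ne_le (hL : ∀ v ∈ L, degIn G L v ≤ r)
    (hD : ∑ v ∈ L, degIn G L v + D = r * #L) : #{v ∈ L | degIn G L v ≠ r} ≤ D := by
  have hle : ∑ v ∈ L, degIn G L v + #{v ∈ L | degIn G L v ≠ r} ≤ r * #L := by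
    rw [card_filter, ← sum_add_distrib, mul_comm, ← smul_eq_mul]
    refine sum_le_card_nsmul _ _ _ fun v hv ↦ ?_
    have := hL v hv
    split_ifs <;> omega
  omega

lemma WheelFree.hasAtMostOneEdgeIn (hk : 3 ≤ k) (hG : WheelFree (2 * k + 1) G)
    (hL : ∀ v ∈ L, codegIn G R v ≤ m) (hR : ∀ v ∈ R, codegIn G L v ≤ m)
    (hdeg : ∀ v ∈ L, degIn G L v ≤ k - 1) (hRk : k * m + k + 1 ≤ #R)
    (hD : ∑ v ∈ L, degIn G L v + D = (k - 1) * #L) (hDL : D + 4 * (k * m) < #L) :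
    HasAtMostOneEdgeIn G R := by
  classical
  intro a ha b hb c hc d hd hab hcd
  have hkm : k - 1 + 1 = k := by omega
  let bad (w : Fin n) : Finset (Fin n) := {v ∈ L | w ∉ starNbrs G L R v}
  have hbad {w : Fin n} (hw : w ∈ R) : #(bad w) ≤ k * m := by
    simpa only [hkm] using card_filter_notMem_starNbrs_le hR hdeg hw
  obtain ⟨v, hv, hgood⟩ : ∃ v ∈ L,
      v ∉ {v ∈ L | degIn G L v ≠ k - 1} ∪ (bad a ∪ bad b ∪ (bad c ∪ bad d)) := by
    refine exists_mem_notMem_of_card_lt_card ((card_union_le _ _).trans_lt ?_)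
    have := card_filter_degIn_ne_le hdeg hD
    have := card_union_le (bad a ∪ bad b) (bad c ∪ bad d)
    have := card_union_le (bad a) (bad b)
    have := card_union_le (bad c) (bad d)
    linarith [hbad ha, hbad hb, hbad hc, hbad hd]
  simp only [bad, mem_union, mem_filter, hv, true_and, not_or, not_not] at hgood
  obtain ⟨hvk, ⟨hva, hvb⟩, hvc, hvd⟩ := hgood
  have hcard := card_le_card_starNbrs_add hL hv hvk.le
  rw [hkm] at hcard
  exact hG.hasAtMostOneEdgeIn_starNbrs hk hvk (by omega) a hva b hvb c hvc d hvd hab hcd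

lemma HasAtMostOneEdgeIn.edgeCount_induce_eq_one (hR : HasAtMostOneEdgeIn G R) (ha : a ∈ R)
    (hb : b ∈ R) (hab : G.Adj a b) : edgeCount (G.induce (R : Set (Fin n))) = 1 := by
  classical
  unfold edgeCount
  refine card_eq_one.2 ⟨s(⟨a, ha⟩, ⟨b, hb⟩), ?_⟩
  ext e
  induction e with
  | _ c d =>
    simp only [SimpleGraph.mem_edgeFinset, SimpleGraph.mem_edgeSet, SimpleGraph.comap_adj,
      Function.Embedding.subtype_apply, mem_singleton, Sym2.eq_iff, Subtype.ext_iff]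
    refine ⟨fun hcd ↦ Sym2.eq_iff.1 (hR c c.2 d d.2 a ha b hb hcd hab), ?_⟩
    rintro (⟨hc, hd⟩ | ⟨hc, hd⟩) <;> rw [hc, hd]
    exacts [hab, hab.symm]

lemma even_sum_degIn (G : SimpleGraph (Fin n)) (L : Finset (Fin n)) :
    Even (∑ v ∈ L, degIn G L v) := by
  classical
  induction L using Finset.induction_on with
  | empty => simp
  | insert v L hv ih =>
    have hdisj : Disjoint {v} L := disjoint_singleton_left.2 hv
    have hself : degIn G {v} v = 0 := by simp [degIn_eq_card_inter]
    have hcomm : ∑ u ∈ L, degIn G {v} u = degIn G L v := by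
      rw [sum_degIn_comm, sum_singleton]
    have hinsert (u : Fin n) : degIn G (insert v L) u = degIn G {v} u + degIn G L u := by
      rw [insert_eq, degIn_union hdisj]
    simp only [hinsert, sum_insert hv, sum_add_distrib, hself, hcomm]
    rw [zero_add, ← add_assoc]
    exact (Even.add_self _).add ih

lemma mod_two_eq_of_sum_degIn_add_eq (hD : ∑ v ∈ L, degIn G L v + D = r * #L) :
    D % 2 = r * #L % 2 := by
  have := even_sum_degIn G L
  grind

end OneEdge

section Gain

open Finset

variable {n : ℕ} {G J : SimpleGraph (Fin n)} {A : Finset (Fin n)} {a b : Fin n}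
  {x y : Fin n → ℝ}

lemma IsPerronVector.neg_two_mul_sum_degIn_le (hx : IsPerronVector G x)
    (hy : ∀ v ∈ A, 0 ≤ y v ∧ y v ≤ 2) :
    -(2 * ∑ v ∈ A, degIn G A v : ℕ) ≤ ∑ v ∈ A, y v * (wdegIn J A x v - wdegIn G A x v) := by
  push_cast
  rw [mul_sum, ← sum_neg_distrib]
  refine sum_le_sum fun v hv ↦ ?_
  have hJ : 0 ≤ wdegIn J A x v := wdegIn_nonneg fun u _ ↦ hx.nonneg u
  have hG := hx.wdegIn_le_degIn A v
  calc -(2 * (degIn G A v : ℝ)) ≤ -(y v * degIn G A v) := by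
        gcongr
        exact (hy v hv).2
    _ = y v * (0 - degIn G A v) := by ring
    _ ≤ y v * (wdegIn J A x v - wdegIn G A x v) := by
        gcongr
        exact (hy v hv).1

lemma sum_mul_wdegIn_sub_nonneg (hx : ∀ v ∈ A, 0 ≤ x v) (hy : ∀ v ∈ A, 0 ≤ y v)
    (hGJ : ∀ u ∈ A, ∀ v ∈ A, G.Adj u v → J.Adj u v) :
    0 ≤ ∑ v ∈ A, y v * (wdegIn J A x v - wdegIn G A x v) :=
  sum_nonneg fun v hv ↦ mul_nonneg (hy v hv)
    (sub_nonneg.2 (wdegIn_le_wdegIn_of_adj hx (hGJ v hv)))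

lemma mul_le_sum_mul_wdegIn_sub (hx : ∀ v ∈ A, 0 ≤ x v) (hy : ∀ v ∈ A, 0 ≤ y v)
    (hG : ∀ u ∈ A, ∀ v ∈ A, ¬ G.Adj u v) (ha : a ∈ A) (hb : b ∈ A) (hab : J.Adj a b) :
    y a * x b ≤ ∑ v ∈ A, y v * (wdegIn J A x v - wdegIn G A x v) := by
  classical
  have hzero {v : Fin n} (hv : v ∈ A) : wdegIn G A x v = 0 := by
    rw [wdegIn_eq_sum_ite]
    exact sum_eq_zero fun u hu ↦ if_neg (hG v hv u hu)
  have hnonneg (v) (hv : v ∈ A) : 0 ≤ y v * (wdegIn J A x v - wdegIn G A x v) := by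
    rw [hzero hv, sub_zero]
    exact mul_nonneg (hy v hv) (wdegIn_nonneg hx)
  refine le_trans ?_ (single_le_sum hnonneg ha)
  rw [hzero ha, sub_zero]
  refine mul_le_mul_of_nonneg_left ?_ (hy a ha)
  rw [wdegIn]
  exact single_le_sum (f := x) (fun u hu ↦ hx u (mem_filter.1 hu).1) (mem_filter.2 ⟨hb, hab⟩)

end Gain

section Extremal

open Finset Filter

variable {n k m D : ℕ} {G : SimpleGraph (Fin n)} {L R : Finset (Fin n)} {a b : Fin n}
  {x : Fin n → ℝ}

/-- The maximum cut `(L, R)` of a `W_{2k+1}`-free graph `G` of maximum spectral radius with Perron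
vector `x`, once `n` is large enough for the cut to be almost balanced and almost complete and for
`x` to be almost constant. Every vertex misses at most `m` vertices of the other part. -/
structure IsSpexPartition (k m : ℕ) (G : SimpleGraph (Fin n)) (L R : Finset (Fin n))
    (x : Fin n → ℝ) : Prop where
  three_le : 3 ≤ k
  large : 1000 * k ^ 2 ≤ n
  sq_mul_le : 100 * (k ^ 2 * m) ≤ n
  isSpexWheel : IsSpexWheel (2 * k + 1) G
  eq_compl : R = Lᶜ
  card_left : 100 * #L ≤ 51 * n
  card_right : 100 * #R ≤ 51 * n
  codegIn_left : ∀ v ∈ L, codegIn G R v ≤ m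
  codegIn_right : ∀ v ∈ R, codegIn G L v ≤ m
  lam1_le : lam1 G ≤ 51 / 100 * n
  isPerronVector : IsPerronVector G x
  le_apply : ∀ v, 1 - 1 / 900 ≤ x v

lemma eventually_exists_isSpexPartition (hk : 3 ≤ k) :
    ∀ᶠ n : ℕ in atTop, ∀ G : SimpleGraph (Fin n), IsSpexWheel (2 * k + 1) G → ∀ L R,
      IsMaxCut G L R → ∃ m x, IsSpexPartition k m G L R x := by
  have hk' : (3 : ℝ) ≤ k := mod_cast hk
  obtain ⟨η, hη⟩ : ∃ η : ℝ, η = 1 / (100 * (k : ℝ) ^ 2) := ⟨_, rfl⟩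
  have hη₀ : 0 < η := by rw [hη]; positivity
  have hηk : 100 * ((k : ℝ) ^ 2 * η) = 1 := by rw [hη]; field_simp
  have hk₉ : 9 ≤ (k : ℝ) ^ 2 := by nlinarith
  have hη900 : η ≤ 1 / 900 := by nlinarith
  have hη16 : η ≤ 1 / (16 * k) := by
    rw [le_div_iff₀ (by positivity)]
    nlinarith
  filter_upwards [eventually_isNearCompletePartition (by omega) hη₀ hη16,
    eventually_ge_atTop (1000 * k ^ 2)] with n hpart hn G hG L R hLR
  obtain ⟨h, hlam, hle⟩ := hpart G hG L R hLR
  have hηn : η * n ≤ 1 / 900 * n := by gcongr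
  obtain ⟨x, hx⟩ := exists_isPerronVector (by nlinarith) G
  have hcard {c : ℕ} (hc : c ≤ (1 / 2 + η) * n) : 100 * c ≤ 51 * n := by
    rw [← Nat.cast_le (α := ℝ)]
    push_cast
    linarith
  have hfloor : (⌊η * n⌋₊ : ℝ) ≤ η * n := Nat.floor_le (by positivity)
  refine ⟨⌊η * n⌋₊, x, hk, hn, ?_, hG, h.eq_compl, hcard h.card_left, hcard h.card_right,
    fun v hv ↦ Nat.le_floor (h.codegIn_left v hv), fun v hv ↦ Nat.le_floor (h.codegIn_right v hv),
    by linarith, hx, fun v ↦ by linarith [hle x hx v]⟩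
  rw [← Nat.cast_le (α := ℝ)]
  push_cast
  calc 100 * ((k : ℝ) ^ 2 * ⌊η * n⌋₊) ≤ 100 * ((k : ℝ) ^ 2 * (η * n)) := by gcongr
    _ = 100 * ((k : ℝ) ^ 2 * η) * n := by ring
    _ = n := by rw [hηk, one_mul]

namespace IsSpexPartition

lemma symm (h : IsSpexPartition k m G L R x) : IsSpexPartition k m G R L x where
  __ := h
  eq_compl := by rw [h.eq_compl, compl_compl]
  card_left := h.card_right
  card_right := h.card_left
  codegIn_left := h.codegIn_right
  codegIn_right := h.codegIn_left

lemma three_thousand_mul_le (h : IsSpexPartition k m G L R x) : 3000 * k ≤ n := by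
  nlinarith [h.three_le, h.large]

lemma three_hundred_mul_mul_le (h : IsSpexPartition k m G L R x) : 300 * (k * m) ≤ n := by
  nlinarith [Nat.mul_le_mul_right (k * m) h.three_le, h.sq_mul_le]

lemma card_add_card (h : IsSpexPartition k m G L R x) : #L + #R = n := by
  rw [h.eq_compl, card_add_card_compl, Fintype.card_fin]

lemma le_card_right (h : IsSpexPartition k m G L R x) : 49 * n ≤ 100 * #R := by
  have := h.card_add_card
  have := h.card_left
  omega

lemma mul_add_lt_card_right (h : IsSpexPartition k m G L R x) : k * m + m + k < #R := by
  have := h.three_thousand_mul_le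
  have := h.three_hundred_mul_mul_le
  have := h.le_card_right
  have := h.three_le
  have : m ≤ k * m := Nat.le_mul_of_pos_left m (by omega)
  omega

lemma degIn_left_le (h : IsSpexPartition k m G L R x) {v : Fin n} (hv : v ∈ L) :
    degIn G L v ≤ k - 1 :=
  h.isSpexWheel.1.degIn_le (by have := h.three_le; omega) h.codegIn_left
    (by linarith [h.mul_add_lt_card_right]) hv

lemma exists_isBlockJoin (h : IsSpexPartition k m G L R x) (hab : a ≠ b) (ha : a ∈ R)
    (hb : b ∈ R) : ∃ J, IsBlockJoin (k - 1) ((k - 1) * #L % 2) L a b J ∧ lam1 J ≤ lam1 G := by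
  obtain ⟨r, rfl⟩ : ∃ r, k = r + 1 := Nat.exists_eq_add_one.2 (by linarith [h.three_le])
  have hr : 2 ≤ r := by linarith [h.three_le]
  have hL : 2 * (r + 1) * (r + 1) + (r + 2) ≤ #L := by
    nlinarith [h.symm.le_card_right, h.large]
  simp only [h.eq_compl, mem_compl] at ha hb
  obtain ⟨J, hJ⟩ := _root_.exists_isBlockJoin (hasBlockGraph_mod_two hr hL) hab ha hb
  exact ⟨J, hJ, h.isSpexWheel.2 J (hJ.wheelFree (by omega))⟩

lemma le_lam1_of_isBlockJoin (h : IsSpexPartition k m G L R x) {r d : ℕ} {J : SimpleGraph (Fin n)}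
    (hJ : IsBlockJoin r d L a b J) : 48 / 100 * n ≤ lam1 J := by
  have hn : (0 : ℝ) < n := by
    have := h.three_thousand_mul_le
    have := h.three_le
    exact_mod_cast (by omega : 0 < n)
  have hL : 49 * n ≤ 100 * (#L : ℝ) := mod_cast h.symm.le_card_right
  have hR : 49 * n ≤ 100 * (#Lᶜ : ℝ) := mod_cast h.eq_compl ▸ h.le_card_right
  have := hJ.two_mul_card_mul_card_compl_le
  have : 49 / 100 * (n : ℝ) * (49 / 100 * n) ≤ #L * #Lᶜ := by gcongr <;> linarith
  exact le_of_mul_le_mul_right (by nlinarith) hn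

-- `J[L]` is as regular as possible, and the parity defect on the right is its missing degree.
lemma exists_comparison (h : IsSpexPartition k m G L R x)
    (hD : ∑ v ∈ L, degIn G L v + D = (k - 1) * #L) (hab : a ≠ b) (ha : a ∈ R) (hb : b ∈ R) :
    ∃ (J : SimpleGraph (Fin n)) (y : Fin n → ℝ),
      (∀ u ∈ R, ∀ v ∈ R, J.Adj u v ↔ s(u, v) = s(a, b)) ∧ (∀ v ∈ R, 1 / 2 ≤ y v ∧ y v ≤ 2) ∧
      (1 - 1 / 900) * D + ∑ v ∈ R, y v * (wdegIn J R x v - wdegIn G R x v)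
        ≤ ((k - 1) * #L % 2 : ℕ) + 1 / 10 := by
  obtain ⟨J, hJ, hJG⟩ := h.exists_isBlockJoin hab ha hb
  have hJn := h.le_lam1_of_isBlockJoin hJ
  have hk : 3000 * (k : ℝ) ≤ n := mod_cast h.three_thousand_mul_le
  have hk₃ : (3 : ℝ) ≤ k := mod_cast h.three_le
  have hL : 100 * (#L : ℝ) ≤ 51 * n := mod_cast h.card_left
  have hL' : 49 * n ≤ 100 * (#L : ℝ) := mod_cast h.symm.le_card_right
  have hkr : ((k - 1 : ℕ) : ℝ) + 1 = k := mod_cast Nat.sub_add_cancel (by linarith [h.three_le])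
  obtain ⟨y, hy, hineq⟩ := hJ.exists_one_sub_mul_add_le (by have := a.isLt; omega)
    (by omega) (by rw [hkr]; linarith) (by linarith) (by linarith [h.lam1_le]) hJG h.isPerronVector
    h.le_apply (fun v hv ↦ h.degIn_left_le hv) hD
  rw [h.eq_compl]
  simp only [mem_compl]
  exact ⟨J, y, hJ.adj_compl, hy, hineq⟩

lemma sum_degIn_right_le (h : IsSpexPartition k m G L R x) {v : Fin n} (hv : v ∈ L)
    (hdeg : degIn G L v = k - 1) : 50 * ∑ w ∈ R, degIn G R w ≤ n + 100 := by
  classical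
  have hk : k - 1 + 1 = k := by have := h.three_le; omega
  have hcard := card_le_card_starNbrs_add h.codegIn_left hv hdeg.le
  rw [hk] at hcard
  have hone := h.isSpexWheel.1.hasAtMostOneEdgeIn_starNbrs h.three_le hdeg
    (R := R) (by have := h.mul_add_lt_card_right; omega)
  have hsum := hone.sum_degIn_le starNbrs_subset fun w hw ↦ h.symm.degIn_left_le hw
  have hsdiff := card_sdiff_add_card_eq_card (starNbrs_subset (G := G) (L := L) (R := R) (v := v))
  have hmul : #(R \ starNbrs G L R v) * (k - 1) ≤ k ^ 2 * m :=
    calc #(R \ starNbrs G L R v) * (k - 1) ≤ k * m * k := by gcongr <;> omega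
      _ = k ^ 2 * m := by ring
  have := h.sq_mul_le
  omega

lemma exists_ne_mem_right (h : IsSpexPartition k m G L R x) : ∃ a ∈ R, ∃ b ∈ R, a ≠ b :=
  one_lt_card.1 (by have := h.mul_add_lt_card_right; have := h.three_le; omega)

lemma deficiency_le (h : IsSpexPartition k m G L R x) (hv : ∃ v ∈ L, degIn G L v = k - 1)
    (hD : ∑ v ∈ L, degIn G L v + D = (k - 1) * #L) : 20 * D ≤ n + 140 := by
  obtain ⟨v, hv, hdeg⟩ := hv
  obtain ⟨a, ha, b, hb, hab⟩ := h.exists_ne_mem_right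
  obtain ⟨J, y, -, hy, hineq⟩ := h.exists_comparison hD hab ha hb
  have hneg := h.isPerronVector.neg_two_mul_sum_degIn_le (J := J) (y := y)
    fun v hv ↦ ⟨by linarith [hy v hv], (hy v hv).2⟩
  have hsum : 50 * ((∑ w ∈ R, degIn G R w : ℕ) : ℝ) ≤ n + 100 :=
    mod_cast h.sum_degIn_right_le hv hdeg
  have hd : (((k - 1) * #L % 2 : ℕ) : ℝ) ≤ 1 := mod_cast Nat.lt_succ_iff.1 (Nat.mod_lt _ two_pos)
  rw [← Nat.cast_le (α := ℝ)]
  push_cast at hneg hsum ⊢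
  linarith [n.cast_nonneg (α := ℝ)]

lemma hasAtMostOneEdgeIn (h : IsSpexPartition k m G L R x) (hv : ∃ v ∈ L, degIn G L v = k - 1)
    (hD : ∑ v ∈ L, degIn G L v + D = (k - 1) * #L) : HasAtMostOneEdgeIn G R := by
  refine h.isSpexWheel.1.hasAtMostOneEdgeIn h.three_le h.codegIn_left h.codegIn_right
    (fun v hv ↦ h.degIn_left_le hv) (by linarith [h.mul_add_lt_card_right]) hD ?_
  have := h.deficiency_le hv hD
  have := h.symm.le_card_right
  have := h.three_thousand_mul_le
  have := h.three_le
  have := h.three_hundred_mul_mul_le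
  omega

lemma exists_adj_right (h : IsSpexPartition k m G L R x)
    (hD : ∑ v ∈ L, degIn G L v + D = (k - 1) * #L) : ∃ a ∈ R, ∃ b ∈ R, G.Adj a b := by
  by_contra! hno
  obtain ⟨a, ha, b, hb, hab⟩ := h.exists_ne_mem_right
  obtain ⟨J, y, hJ, hy, hineq⟩ := h.exists_comparison hD hab ha hb
  have hgain := mul_le_sum_mul_wdegIn_sub (y := y) (fun v _ ↦ h.isPerronVector.nonneg v)
    (fun v hv ↦ by linarith [hy v hv]) hno ha hb ((hJ a ha b hb).2 rfl)
  have hyx : 1 / 2 * (1 - 1 / 900) ≤ y a * x b := by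
    gcongr
    exacts [by linarith [hy a ha], (hy a ha).1, h.le_apply b]
  have hparity := mod_two_eq_of_sum_degIn_add_eq hD
  have hd : (((k - 1) * #L % 2 : ℕ) : ℝ) ≤ D := mod_cast (by omega)
  have hd' : (((k - 1) * #L % 2 : ℕ) : ℝ) ≤ 1 := mod_cast (by omega)
  linarith

lemma deficiency_eq (h : IsSpexPartition k m G L R x) (hR : HasAtMostOneEdgeIn G R)
    (hD : ∑ v ∈ L, degIn G L v + D = (k - 1) * #L) : D = (k - 1) * #L % 2 := by
  obtain ⟨a, ha, b, hb, hab⟩ := h.exists_adj_right hD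
  obtain ⟨J, y, hJ, hy, hineq⟩ := h.exists_comparison hD hab.ne ha hb
  have hgain := sum_mul_wdegIn_sub_nonneg (G := G) (J := J) (y := y)
    (fun v _ ↦ h.isPerronVector.nonneg v) (fun v hv ↦ by linarith [hy v hv])
    fun u hu v hv huv ↦ (hJ u hu v hv).2 (hR u hu v hv a ha b hb huv hab)
  have hd : (((k - 1) * #L % 2 : ℕ) : ℝ) ≤ 1 := mod_cast (by omega)
  have hlt : D < (k - 1) * #L % 2 + 2 := by
    rw [← Nat.cast_lt (α := ℝ)]
    push_cast
    linarith
  have := mod_two_eq_of_sum_degIn_add_eq hD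
  omega

end IsSpexPartition

end Extremal

section Regularity

open Finset Filter

variable {ι : Type*} {s : Finset ι} {f : ι → ℕ} {r : ℕ}

lemma eq_of_sum_eq_mul_card (hf : ∀ i ∈ s, f i ≤ r) (hsum : ∑ i ∈ s, f i = r * #s) :
    ∀ i ∈ s, f i = r := by
  rw [mul_comm, ← smul_eq_mul, ← sum_const] at hsum
  exact (sum_eq_sum_iff_of_le hf).1 hsum

lemma exists_eq_sub_one_of_sum_add_one_eq (hf : ∀ i ∈ s, f i ≤ r)
    (hsum : ∑ i ∈ s, f i + 1 = r * #s) :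
    ∃ j ∈ s, f j = r - 1 ∧ ∀ i ∈ s, i ≠ j → f i = r := by
  classical
  obtain ⟨j, hj, hlt⟩ : ∃ j ∈ s, f j < r := exists_lt_of_sum_lt (by
    rw [sum_const, smul_eq_mul, mul_comm]
    omega)
  have hf' (i) (hi : i ∈ s.erase j) : f i ≤ r := hf i (mem_of_mem_erase hi)
  have hle : ∑ i ∈ s.erase j, f i ≤ r * #(s.erase j) := by
    rw [mul_comm]
    exact sum_le_card_nsmul _ _ _ hf'
  rw [← sum_erase_add s f hj, ← card_erase_add_one hj, mul_add_one] at hsum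
  refine ⟨j, hj, by omega, fun i hi hij ↦ ?_⟩
  exact eq_of_sum_eq_mul_card hf' (by omega) i (mem_erase.2 ⟨hij, hi⟩)

end Regularity

section Main

open Finset Filter

theorem regular_inside_L_general (k : ℕ) (hk : 3 ≤ k) :
    ∃ N : ℕ, ∀ n : ℕ, N ≤ n → ∀ G : SimpleGraph (Fin n), IsSpexWheel (2 * k + 1) G →
      ∀ L R : Finset (Fin n), IsMaxCut G L R →
        (∃ v ∈ L, degIn G L v = k - 1) →
        (Even ((k - 1) * L.card) → ∀ v ∈ L, degIn G L v = k - 1) ∧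
        (Odd ((k - 1) * L.card) →
          ∃ w ∈ L, degIn G L w = k - 2 ∧ ∀ v ∈ L, v ≠ w → degIn G L v = k - 1) ∧
        edgeCount (G.induce (R : Set (Fin n))) = 1 := by
  refine eventually_atTop.1 ?_
  filter_upwards [eventually_exists_isSpexPartition hk] with n hpart G hG L R hLR hv
  obtain ⟨m, x, h⟩ := hpart G hG L R hLR
  have hdeg (v) (hv : v ∈ L) : degIn G L v ≤ k - 1 := h.degIn_left_le hv
  obtain ⟨D, hD⟩ : ∃ D, ∑ v ∈ L, degIn G L v + D = (k - 1) * #L := by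
    rw [mul_comm]
    exact Nat.le.dest (sum_le_card_nsmul _ _ _ hdeg)
  have hR := h.hasAtMostOneEdgeIn hv hD
  obtain ⟨a, ha, b, hb, hab⟩ := h.exists_adj_right hD
  rw [h.deficiency_eq hR hD] at hD
  refine ⟨fun heven ↦ ?_, fun hodd ↦ ?_, hR.edgeCount_induce_eq_one ha hb hab⟩
  · rw [Nat.even_iff.1 heven, add_zero] at hD
    exact eq_of_sum_eq_mul_card hdeg hD
  · rw [Nat.odd_iff.1 hodd] at hD
    exact exists_eq_sub_one_of_sum_add_one_eq hdeg hD

end Main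

/-- If `L` has a vertex of internal degree `k - 1`, then `G[L]` is
`(k-1)`-regular when `(k-1)|L|` is even and nearly `(k-1)`-regular when `(k-1)|L|` is
odd, and `G[R]` has exactly one edge. -/
theorem regular_inside_L (k : ℕ) (hk : 3 ≤ k) (hk4 : k ≠ 4) (hk5 : k ≠ 5) :
    ∃ N : ℕ, ∀ n : ℕ, N ≤ n → ∀ G : SimpleGraph (Fin n), IsSpexWheel (2 * k + 1) G →
      ∀ L R : Finset (Fin n), IsMaxCut G L R →
        (∃ v ∈ L, degIn G L v = k - 1) →
        (Even ((k - 1) * L.card) → ∀ v ∈ L, degIn G L v = k - 1) ∧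
        (Odd ((k - 1) * L.card) →
          ∃ w ∈ L, degIn G L w = k - 2 ∧ ∀ v ∈ L, v ≠ w → degIn G L v = k - 1) ∧
        edgeCount (G.induce (R : Set (Fin n))) = 1 :=
  regular_inside_L_general k hk
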